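/- Let λ < 0 and n ≥ 2 be an integer. Then there exist P > 0 and a P-periodic solution (x, y, θ): ℝ → ℝ³ of the generating system with m = n such that x(t) > 0 and y(t) > 0 for all t, the plane curve t ↦ (x(t), y(t)) is injective on [0, P) (the curve is a simple closed curve in the open first quadrant), the function t ↦ x(t)² + y(t)² is non-constant (the curve is not the circle solution), and the curve is symmetric across the diagonal: x(−t) = y(t) and y(−t) = x(t) for all t. -/

import Mathlib

open Real

/-!
In the coordinates `x = r cos (π/4 - u)`, `y = r sin (π/4 - u)`, `θ = -π/4 - u - ψ` about the
diagonal, let the curve start on the diagonal, orthogonally to it and at distance `r₀` from the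
origin, until it comes back. While `0 < ψ < π` the radius `r` decreases, so the arc is embedded. If
it comes back with `ψ = π`, it meets the diagonal orthogonally again and closes up with its mirror
image; the loop is not a circle about the origin because `r` is not constant.

Such an arc is found by continuity in `r₀`. With `a = n - 1` and `μ = -λ`, the potential
`ψ - μ t - (r² / 2 - (2a + 1)) u` bounds the time in which an arc with `ψ < π` returns, and a lower
bound for the flux `sin ψ (cos 2u)ᵃ` at `ψ = π / 2` keeps the arc away from the axes, so a limit of
returning arcs returns, possibly with `ψ = π` at the end. Arcs from large `r₀` return, whereas by
Gronwall's inequality an arc does not return when `r₀` is just above the radius of the circle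
solution. Arcs that return with `ψ < π` at the end persist under small changes of `r₀`; the smallest
returning `r₀` beyond that one therefore returns with `ψ = π`.
-/

namespace GeneratingCurve

open Set Filter Topology
open scoped NNReal

/-! ### Sign of the derivative -/

section Calculus

variable {f f' : ℝ → ℝ} {a b c : ℝ}

theorem le_of_hasDerivAt_nonneg (hab : a ≤ b) (hf : ∀ t ∈ Icc a b, HasDerivAt f (f' t) t)
    (hf' : ∀ t ∈ Ioo a b, 0 ≤ f' t) : f a ≤ f b := by
  refine monotoneOn_of_deriv_nonneg (convex_Icc a b) (HasDerivAt.continuousOn hf) ?_ ?_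
    (left_mem_Icc.2 hab) (right_mem_Icc.2 hab) hab <;> rw [interior_Icc]
  · exact fun t ht => (hf t (Ioo_subset_Icc_self ht)).differentiableAt.differentiableWithinAt
  · exact fun t ht => (hf t (Ioo_subset_Icc_self ht)).deriv.symm ▸ hf' t ht

theorem lt_of_hasDerivAt_pos (hab : a < b) (hf : ∀ t ∈ Icc a b, HasDerivAt f (f' t) t)
    (hf' : ∀ t ∈ Ioo a b, 0 < f' t) : f a < f b := by
  refine strictMonoOn_of_deriv_pos (convex_Icc a b) (HasDerivAt.continuousOn hf) ?_
    (left_mem_Icc.2 hab.le) (right_mem_Icc.2 hab.le) hab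
  rw [interior_Icc]
  exact fun t ht => (hf t (Ioo_subset_Icc_self ht)).deriv.symm ▸ hf' t ht

theorem eventually_lt_left_of_hasDerivAt_pos {d : ℝ} (hf : HasDerivAt f d c) (hd : 0 < d) :
    ∀ᶠ t in 𝓝[<] c, f t < f c := by
  have hslope := (hasDerivAt_iff_tendsto_slope_left_right.1 hf).1.eventually (lt_mem_nhds hd)
  filter_upwards [hslope, self_mem_nhdsWithin] with t ht (htc : t < c)
  exact (slope_pos_iff_of_le htc.le).1 (slope_comm f t c ▸ ht)

theorem eventually_gt_right_of_hasDerivAt_pos {d : ℝ} (hf : HasDerivAt f d c) (hd : 0 < d) :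
    ∀ᶠ t in 𝓝[>] c, f c < f t := by
  have hslope := (hasDerivAt_iff_tendsto_slope_left_right.1 hf).2.eventually (lt_mem_nhds hd)
  filter_upwards [hslope, self_mem_nhdsWithin] with t ht (htc : c < t)
  exact (slope_pos_iff_of_le htc.le).1 ht

theorem lt_of_hasDerivAt_pos_of_eq (hf : ∀ t ∈ Icc a b, HasDerivAt f (f' t) t) (ha : c ≤ f a)
    (hf' : ∀ t ∈ Icc a b, f t = c → 0 < f' t) : ∀ t ∈ Ioc a b, c < f t := by
  have hle : ∀ t ∈ Icc a b, c ≤ f t := fun t ht =>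
    neg_le_neg_iff.1 <| image_le_of_deriv_right_lt_deriv_boundary'
      (f := fun t => -f t) (f' := fun t => -f' t) (B := fun _ => -c) (B' := fun _ => 0)
      (HasDerivAt.continuousOn fun t ht => (hf t ht).neg)
      (fun t ht => (hf t (Ico_subset_Icc_self ht)).neg.hasDerivWithinAt) (neg_le_neg ha)
      continuousOn_const (fun t _ => hasDerivWithinAt_const _ _ _)
      (fun t ht h => neg_neg_of_pos (hf' t (Ico_subset_Icc_self ht) (neg_inj.1 h))) ht
  intro t ht
  have htI : t ∈ Icc a b := Ioc_subset_Icc_self ht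
  refine (hle t htI).lt_of_ne fun heq => ?_
  obtain ⟨s, hst, hs⟩ := ((eventually_lt_left_of_hasDerivAt_pos (hf t htI)
    (hf' t htI heq.symm)).and (Ioo_mem_nhdsLT ht.1)).exists
  exact (hle s ⟨hs.1.le, hs.2.le.trans ht.2⟩).not_gt (heq ▸ hst)

theorem exists_first_zero (hab : a ≤ b) (hf : ContinuousOn f (Icc a b)) (ha : 0 < f a)
    (hb : f b ≤ 0) : ∃ T ∈ Ioc a b, f T = 0 ∧ ∀ t ∈ Ico a T, 0 < f t := by
  have hS : IsCompact (Icc a b ∩ f ⁻¹' Iic 0) :=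
    isCompact_Icc.of_isClosed_subset (hf.preimage_isClosed_of_isClosed isClosed_Icc isClosed_Iic)
      inter_subset_left
  obtain ⟨T, ⟨hT, hfT⟩, hmin⟩ := hS.exists_isLeast ⟨b, right_mem_Icc.2 hab, hb⟩
  have hpos : ∀ t ∈ Ico a T, 0 < f t := fun t ht => by
    by_contra! h
    exact ht.2.not_ge (hmin ⟨⟨ht.1, ht.2.le.trans hT.2⟩, h⟩)
  have haT : a < T := hT.1.lt_of_ne fun h => (h ▸ hfT : f a ≤ 0).not_gt ha
  obtain ⟨s, hs, hfs⟩ := intermediate_value_Icc' hT.1 (hf.mono (Icc_subset_Icc_right hT.2))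
    ⟨hfT, ha.le⟩
  have hsT : s = T := hs.2.antisymm (hmin ⟨⟨hs.1, hs.2.trans hT.2⟩, hfs.le⟩)
  exact ⟨T, ⟨haT, hT.2⟩, hsT ▸ hfs, hpos⟩

theorem exists_first_return {d : ℝ} (hab : a < b) (hf : ContinuousOn f (Icc a b)) (ha : f a = 0)
    (hd : HasDerivAt f d a) (hdpos : 0 < d) (hb : f b ≤ 0) :
    ∃ T ∈ Ioc a b, f T = 0 ∧ ∀ t ∈ Ioo a T, 0 < f t := by
  obtain ⟨s, hs, hpos⟩ := mem_nhdsGT_iff_exists_Ioc_subset.1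
    (ha ▸ eventually_gt_right_of_hasDerivAt_pos hd hdpos)
  have hsb : s < b := lt_of_not_ge fun h => hb.not_gt (hpos ⟨hab, h⟩)
  obtain ⟨T, hT, hfT, hlt⟩ := exists_first_zero hsb.le (hf.mono (Icc_subset_Icc_left (le_of_lt hs)))
    (hpos ⟨hs, le_rfl⟩) hb
  refine ⟨T, ⟨lt_trans hs hT.1, hT.2⟩, hfT, fun t ht => ?_⟩
  rcases le_total t s with h | h
  exacts [hpos ⟨ht.1, h⟩, hlt t ⟨h, ht.2⟩]

theorem exists_first_exit {d k : ℝ} (hk : 0 < k) (hab : a < b) (hf : ContinuousOn f (Icc a b))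
    (ha : f a = 0) (hd : HasDerivAt f d a) (hdpos : 0 < d) (hb : f b ∉ Ioo 0 k) :
    ∃ T ∈ Ioc a b, (f T = 0 ∨ f T = k) ∧ ∀ t ∈ Ioo a T, f t ∈ Ioo 0 k := by
  obtain ⟨T, hT, hzero, hpos⟩ := exists_first_return (f := fun t => f t * (k - f t)) hab
    (hf.mul (continuousOn_const.sub hf)) (by simp [ha]) (hd.mul (hd.const_sub k))
    (by simpa [ha] using mul_pos hdpos hk) (by
      by_contra! h
      exact hb (by constructor <;> nlinarith))
  refine ⟨T, hT, (mul_eq_zero.1 hzero).imp_right fun h => (sub_eq_zero.1 h).symm, fun t ht => ?_⟩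
  have := hpos t ht
  constructor <;> nlinarith

/-- The derivative controls `f x` near the end point `a`, where it vanishes, and compactness
controls it elsewhere. -/
theorem eventually_forall_pos_Ioc {X : Type*} [TopologicalSpace X] {F F' : X → ℝ → ℝ} {x₀ : X}
    (hF : Continuous ↿F) (hF' : Continuous ↿F') (hderiv : ∀ x t, HasDerivAt (F x) (F' x t) t)
    (hzero : ∀ x, F x a = 0) (hpos' : 0 < F' x₀ a) (hpos : ∀ t ∈ Ioc a b, 0 < F x₀ t) :
    ∀ᶠ x in 𝓝 x₀, ∀ t ∈ Ioc a b, 0 < F x t := by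
  obtain ⟨ε, hε, hnear⟩ : ∃ ε > 0, ∀ᶠ x in 𝓝 x₀, ∀ t ∈ Icc a (a + ε), 0 < F' x t := by
    have h : ∀ᶠ z : X × ℝ in 𝓝 (x₀, a), 0 < F' z.1 z.2 :=
      (hF'.tendsto (x₀, a)).eventually (lt_mem_nhds hpos')
    rw [nhds_prod_eq] at h
    obtain ⟨p, hp, q, hq, hpq⟩ := eventually_prod_iff.1 h
    obtain ⟨ε, hε, hball⟩ := Metric.eventually_nhds_iff.1 hq
    refine ⟨ε / 2, half_pos hε, hp.mono fun x hx t ht => hpq hx (hball ?_)⟩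
    rw [Real.dist_eq, abs_lt]
    constructor <;> linarith [ht.1, ht.2]
  have hfar : ∀ᶠ x in 𝓝 x₀, ∀ t ∈ Icc (a + ε) b, 0 < F x t :=
    isCompact_Icc.eventually_forall_of_forall_eventually fun t ht =>
      (hF.tendsto (x₀, t)).eventually (lt_mem_nhds (hpos t ⟨by linarith [ht.1], ht.2⟩))
  filter_upwards [hnear, hfar] with x hx hx' t ht
  rcases le_total t (a + ε) with h | h
  · exact hzero x ▸ lt_of_hasDerivAt_pos ht.1 (fun s _ => hderiv x s)
      (fun s hs => hx s ⟨hs.1.le, hs.2.le.trans h⟩)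
  · exact hx' t ⟨h, ht.2⟩

end Calculus

/-! ### Flows of bounded Lipschitz vector fields -/

section Flow

variable {E : Type*} [NormedAddCommGroup E] [NormedSpace ℝ E] {V : E → E} {K L : ℝ≥0}

theorem exists_hasDerivAt_Ioo_of_lipschitzWith [CompleteSpace E] (hK : LipschitzWith K V)
    (hL : ∀ x, ‖V x‖ ≤ L) (p : E) (R : ℝ≥0) :
    ∃ γ : ℝ → E, γ 0 = p ∧ ∀ t ∈ Ioo (-R : ℝ) R, HasDerivAt γ (V (γ t)) t := by
  have hPL : IsPicardLindelof (fun _ => V) (tmin := -R) (tmax := R)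
      ⟨0, by simp⟩ p (L * R) 0 L K := by
    refine ⟨fun t _ => hK.lipschitzOnWith, fun x _ => continuousOn_const, fun t _ x _ => hL x, ?_⟩
    simp
  obtain ⟨γ, h0, hγ⟩ := hPL.exists_eq_forall_mem_Icc_hasDerivWithinAt₀
  exact ⟨γ, h0, fun t ht => (hγ t (Ioo_subset_Icc_self ht)).hasDerivAt (Icc_mem_nhds ht.1 ht.2)⟩

theorem exists_hasDerivAt_of_lipschitzWith [CompleteSpace E] (hK : LipschitzWith K V)
    (hL : ∀ x, ‖V x‖ ≤ L) (p : E) : ∃ γ : ℝ → E, γ 0 = p ∧ ∀ t, HasDerivAt γ (V (γ t)) t := by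
  choose γ hγ0 hγ using exists_hasDerivAt_Ioo_of_lipschitzWith hK hL p
  have hagree : ∀ {R S : ℝ≥0} {t : ℝ}, |t| < R → |t| < S → γ R t = γ S t := by
    suffices ∀ {R S : ℝ≥0} {t : ℝ}, R ≤ S → |t| < R → γ R t = γ S t by
      intro R S t hR hS
      rcases le_total R S with h | h
      exacts [this h hR, (this h hS).symm]
    intro R S t hRS ht
    have hR : (0 : ℝ) < R := (abs_nonneg t).trans_lt ht
    have hRS' : (R : ℝ) ≤ S := hRS
    exact ODE_solution_unique_of_mem_Ioo (v := fun _ => V) (s := fun _ => univ)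
      (fun t _ => hK.lipschitzOnWith) ⟨neg_neg_of_pos hR, hR⟩ (fun s hs => ⟨hγ R s hs, trivial⟩)
      (fun s hs => ⟨hγ S s (Ioo_subset_Ioo (neg_le_neg hRS') hRS' hs), trivial⟩)
      (by rw [hγ0, hγ0]) (abs_lt.1 ht)
  refine ⟨fun t => γ (‖t‖₊ + 1) t, hγ0 _, fun t => ?_⟩
  have ht : |t| < (‖t‖₊ + 1 : ℝ≥0) := by simp
  refine (hγ _ t (abs_lt.1 ht)).congr_of_eventuallyEq ?_
  filter_upwards [Ioo_mem_nhds (abs_lt.1 ht).1 (abs_lt.1 ht).2] with s hs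
  exact hagree (by simp) (abs_lt.2 hs)

theorem dist_le_of_hasDerivAt (hK : LipschitzWith K V) {γ₁ γ₂ : ℝ → E}
    (hγ₁ : ∀ t, HasDerivAt γ₁ (V (γ₁ t)) t) (hγ₂ : ∀ t, HasDerivAt γ₂ (V (γ₂ t)) t) (t : ℝ) :
    dist (γ₁ t) (γ₂ t) ≤ dist (γ₁ 0) (γ₂ 0) * exp (K * |t|) := by
  suffices ∀ {V : E → E} {γ₁ γ₂ : ℝ → E}, LipschitzWith K V → (∀ t, HasDerivAt γ₁ (V (γ₁ t)) t) →
      (∀ t, HasDerivAt γ₂ (V (γ₂ t)) t) → ∀ t ≥ 0,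
      dist (γ₁ t) (γ₂ t) ≤ dist (γ₁ 0) (γ₂ 0) * exp (K * t) by
    have hreverse : ∀ {γ : ℝ → E}, (∀ t, HasDerivAt γ (V (γ t)) t) →
        ∀ t, HasDerivAt (fun s => γ (-s)) (-V (γ (-t))) t := fun h t => by
      simpa [Function.comp_def] using (h (-t)).scomp t (hasDerivAt_neg t)
    rcases le_total 0 t with ht | ht
    · simpa [abs_of_nonneg ht] using this hK hγ₁ hγ₂ t ht
    · simpa [abs_of_nonpos ht] using
        this (V := -V) hK.neg (hreverse hγ₁) (hreverse hγ₂) (-t) (neg_nonneg.2 ht)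
  intro V γ₁ γ₂ hK hγ₁ hγ₂ t ht
  simpa using dist_le_of_trajectories_ODE (v := fun _ => V) (fun _ => hK)
    (HasDerivAt.continuousOn fun s _ => hγ₁ s) (fun s _ => (hγ₁ s).hasDerivWithinAt)
    (HasDerivAt.continuousOn fun s _ => hγ₂ s) (fun s _ => (hγ₂ s).hasDerivWithinAt)
    le_rfl t (right_mem_Icc.2 ht)

theorem exists_continuous_flow [CompleteSpace E] (hK : LipschitzWith K V) (hL : ∀ x, ‖V x‖ ≤ L) :
    ∃ Φ : E → ℝ → E, Continuous ↿Φ ∧ (∀ p, Φ p 0 = p) ∧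
      ∀ p t, HasDerivAt (Φ p) (V (Φ p t)) t := by
  choose Φ hΦ0 hΦ using exists_hasDerivAt_of_lipschitzWith hK hL
  refine ⟨Φ, continuous_iff_continuousAt.2 fun ⟨p, t⟩ => ?_, hΦ0, hΦ⟩
  have hU : (univ : Set E) ×ˢ Ioo (t - 1) (t + 1) ∈ 𝓝 (p, t) :=
    prod_mem_nhds univ_mem (Ioo_mem_nhds (by linarith) (by linarith))
  refine ContinuousOn.continuousAt ?_ hU
  refine continuousOn_prod_of_continuousOn_lipschitzOnWith ↿Φ (exp (K * (|t| + 1))).toNNReal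
    (fun q _ => HasDerivAt.continuousOn fun s _ => hΦ q s)
    (fun s hs => LipschitzOnWith.of_dist_le_mul fun q _ q' _ => ?_)
  have hst : |s| ≤ |t| + 1 := by
    have := abs_sub_abs_le_abs_sub s t
    have : |s - t| < 1 := abs_lt.2 ⟨by linarith [hs.1], by linarith [hs.2]⟩
    linarith
  have h := dist_le_of_hasDerivAt hK (hΦ q) (hΦ q') s
  rw [hΦ0, hΦ0] at h
  rw [Real.coe_toNNReal _ (exp_pos _).le, mul_comm]
  exact h.trans (by gcongr)

end Flow

/-! ### The generating system in polar coordinates about the diagonal -/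

/-- The coefficient of `cos ψ` in the equation for `ψ`. -/
noncomputable def radialCoeff (a r : ℝ) : ℝ := r / 2 - (2 * a + 1) / r

/-- The zero of `radialCoeff a`, which is the radius of the circle solution when `μ = 0`. -/
noncomputable def neutralRadius (a : ℝ) : ℝ := √(2 * (2 * a + 1))

/-- The rate of change of `ψ` in the generating system, where `a = n - 1` and `μ = -λ`. -/
noncomputable def angleRate (a μ r u ψ : ℝ) : ℝ :=
  cos ψ * radialCoeff a r + μ + 2 * a / r * tan (2 * u) * sin ψ

/-- The generating system at time `t` in the coordinates `x = r cos (π/4 - u)`,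
`y = r sin (π/4 - u)`, `θ = -π/4 - u - ψ`: the angle `u` is measured clockwise from the diagonal
and `ψ` clockwise from the direction orthogonal to the radius. -/
structure SolvesPolarAt (a μ : ℝ) (r u ψ : ℝ → ℝ) (t : ℝ) : Prop where
  r_pos : 0 < r t
  dr : HasDerivAt r (-sin (ψ t)) t
  du : HasDerivAt u (cos (ψ t) / r t) t
  dψ : HasDerivAt ψ (angleRate a μ (r t) (u t) (ψ t)) t

/-- The quantity `sin ψ (cos 2u)ᵃ`; the singular term of `angleRate` drops out of its
derivative. -/
noncomputable def flux (a u ψ : ℝ) : ℝ := sin ψ * cos (2 * u) ^ a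

section Coefficients

variable {a μ r u ψ : ℝ}

theorem neutralRadius_pos (ha : 0 ≤ a) : 0 < neutralRadius a := by
  unfold neutralRadius
  positivity

theorem neutralRadius_sq (ha : 0 ≤ a) : neutralRadius a ^ 2 = 2 * (2 * a + 1) :=
  sq_sqrt (by positivity)

theorem radialCoeff_le_radialCoeff {s : ℝ} (ha : 0 ≤ a) (hr : 0 < r) (hrs : r ≤ s) :
    radialCoeff a r ≤ radialCoeff a s := by
  unfold radialCoeff
  gcongr

theorem radialCoeff_neutralRadius (ha : 0 ≤ a) : radialCoeff a (neutralRadius a) = 0 := by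
  have hR := neutralRadius_pos ha
  rw [radialCoeff, sub_eq_zero, div_eq_div_iff two_ne_zero hR.ne']
  linear_combination neutralRadius_sq ha

theorem radialCoeff_nonpos (ha : 0 ≤ a) (hr : 0 < r) (h : r ≤ neutralRadius a) :
    radialCoeff a r ≤ 0 :=
  radialCoeff_neutralRadius ha ▸ radialCoeff_le_radialCoeff ha hr h

theorem radialCoeff_nonneg (ha : 0 ≤ a) (h : neutralRadius a ≤ r) : 0 ≤ radialCoeff a r :=
  radialCoeff_neutralRadius ha ▸ radialCoeff_le_radialCoeff ha (neutralRadius_pos ha) h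

theorem cos_two_mul_pos (hu : |u| < π / 4) : 0 < cos (2 * u) := by
  rw [abs_lt] at hu
  exact cos_pos_of_mem_Ioo ⟨by linarith, by linarith⟩

theorem tan_two_mul_nonneg (hu : u ∈ Ico 0 (π / 4)) : 0 ≤ tan (2 * u) :=
  tan_nonneg_of_nonneg_of_le_pi_div_two (by linarith [hu.1]) (by linarith [hu.2])

theorem le_angleRate (ha : 0 ≤ a) (hr : 0 < r) (hu : u ∈ Ico 0 (π / 4)) (hψ : 0 ≤ sin ψ) :
    cos ψ * radialCoeff a r + μ ≤ angleRate a μ r u ψ := by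
  have := tan_two_mul_nonneg hu
  exact le_add_of_nonneg_right (by positivity)

theorem angleRate_of_sin_eq_zero (hψ : sin ψ = 0) :
    angleRate a μ r u ψ = cos ψ * radialCoeff a r + μ := by
  simp [angleRate, hψ]

theorem angleRate_pi_div_two_pos (ha : 0 ≤ a) (hμ : 0 < μ) (hr : 0 < r)
    (hu : u ∈ Ico 0 (π / 4)) : 0 < angleRate a μ r u (π / 2) := by
  refine hμ.trans_le (le_trans ?_ (le_angleRate ha hr hu (by simp)))
  simp

end Coefficients

namespace SolvesPolarAt

variable {a μ t : ℝ} {r u ψ : ℝ → ℝ}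

theorem hasDerivAt_flux (h : SolvesPolarAt a μ r u ψ t) (hu : |u t| < π / 4) :
    HasDerivAt (fun s => flux a (u s) (ψ s))
      (cos (ψ t) * cos (2 * u t) ^ a * (radialCoeff a (r t) * cos (ψ t) + μ)) t := by
  have hr := h.r_pos.ne'
  have hcos := cos_two_mul_pos hu
  refine (h.dψ.sin.mul ((h.du.const_mul 2).cos.rpow_const (p := a)
    (Or.inl hcos.ne'))).congr_deriv ?_
  rw [rpow_sub_one hcos.ne', angleRate, tan_eq_sin_div_cos]
  field_simp
  ring

/-- The potential is `ψ - μ t - (r² / 2 - (2a + 1)) u`. -/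
theorem lyapunov_le {T : ℝ} (ha : 0 ≤ a) (hT : 0 ≤ T)
    (hsol : ∀ t ∈ Icc 0 T, SolvesPolarAt a μ r u ψ t) (hu : ∀ t ∈ Icc 0 T, u t ∈ Ico 0 (π / 4))
    (hψ : ∀ t ∈ Icc 0 T, 0 ≤ sin (ψ t)) (hu₀ : u 0 = 0) (hψ₀ : ψ 0 = 0) :
    μ * T + (r T ^ 2 / 2 - (2 * a + 1)) * u T ≤ ψ T := by
  have hmono := le_of_hasDerivAt_nonneg hT
    (fun t ht => ((hsol t ht).dψ.sub ((hasDerivAt_id t).const_mul μ)).sub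
      (((((hsol t ht).dr.pow 2).div_const 2).sub_const (2 * a + 1)).mul (hsol t ht).du))
    (fun t ht => ?_)
  · simp only [Pi.sub_apply, Pi.mul_apply, Pi.pow_apply, id, hu₀, hψ₀] at hmono
    linarith
  have htI := Ioo_subset_Icc_self ht
  have hr := (hsol t htI).r_pos
  have hrate := le_angleRate (μ := μ) ha hr (hu t htI) (hψ t htI)
  have hpos : 0 ≤ r t * sin (ψ t) * u t :=
    mul_nonneg (mul_nonneg hr.le (hψ t htI)) (hu t htI).1
  have hcancel : (r t ^ 2 / 2 - (2 * a + 1)) * (cos (ψ t) / r t) =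
      cos (ψ t) * radialCoeff a (r t) := by
    unfold radialCoeff
    field_simp
  simp only [Pi.pow_apply, Nat.cast_ofNat, Nat.add_one_sub_one, pow_one, hcancel]
  linarith

end SolvesPolarAt

/-! ### Return arcs -/

/-- An arc that leaves the diagonal `u = 0` orthogonally, with `ψ = 0`, and returns to it for the
first time at time `T`, staying in the open quadrant and with `ψ` below `π` until then. -/
structure IsReturnArc (a μ T : ℝ) (r u ψ : ℝ → ℝ) : Prop where
  T_pos : 0 < T
  solves : ∀ t ∈ Icc 0 T, SolvesPolarAt a μ r u ψ t
  u_zero : u 0 = 0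
  ψ_zero : ψ 0 = 0
  u_end : u T = 0
  u_pos : ∀ t ∈ Ioo 0 T, 0 < u t
  u_lt : ∀ t ∈ Icc 0 T, u t < π / 4
  ψ_mem : ∀ t ∈ Ioo 0 T, ψ t ∈ Ioo 0 π

/-- The time `m` at which a return arc is radial, and `u` is maximal. -/
structure IsTurningTime (T : ℝ) (ψ : ℝ → ℝ) (m : ℝ) : Prop where
  mem : m ∈ Ioo 0 T
  eq : ψ m = π / 2
  lt : ∀ t ∈ Ico 0 m, ψ t < π / 2
  gt : ∀ t ∈ Ioc m T, π / 2 < ψ t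

namespace IsTurningTime

variable {T m : ℝ} {ψ : ℝ → ℝ}

theorem left_subset (hm : IsTurningTime T ψ m) : Icc 0 m ⊆ Icc 0 T :=
  Icc_subset_Icc_right hm.mem.2.le

theorem right_subset (hm : IsTurningTime T ψ m) : Icc m T ⊆ Icc 0 T :=
  Icc_subset_Icc_left hm.mem.1.le

end IsTurningTime

namespace IsReturnArc

variable {a μ T m s t : ℝ} {r u ψ : ℝ → ℝ}

theorem r_pos (A : IsReturnArc a μ T r u ψ) (ht : t ∈ Icc 0 T) : 0 < r t :=
  (A.solves t ht).r_pos

theorem u_mem (A : IsReturnArc a μ T r u ψ) (ht : t ∈ Icc 0 T) : u t ∈ Ico 0 (π / 4) := by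
  refine ⟨?_, A.u_lt t ht⟩
  rcases eq_endpoints_or_mem_Ioo_of_mem_Icc ht with rfl | rfl | h
  exacts [A.u_zero.ge, A.u_end.ge, (A.u_pos t h).le]

theorem abs_u_lt (A : IsReturnArc a μ T r u ψ) (ht : t ∈ Icc 0 T) : |u t| < π / 4 :=
  (abs_of_nonneg (A.u_mem ht).1).trans_lt (A.u_mem ht).2

theorem cos_two_mul_u_pos (A : IsReturnArc a μ T r u ψ) (ht : t ∈ Icc 0 T) :
    0 < cos (2 * u t) :=
  cos_two_mul_pos (A.abs_u_lt ht)

theorem ψ_mem_Icc (A : IsReturnArc a μ T r u ψ) (ht : t ∈ Icc 0 T) : ψ t ∈ Icc 0 π := by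
  have hcont : ContinuousOn ψ (closure (Ioo 0 T)) := by
    rw [closure_Ioo A.T_pos.ne]
    exact HasDerivAt.continuousOn fun t ht => (A.solves t ht).dψ
  have hmaps : MapsTo ψ (Ioo 0 T) (Icc 0 π) := fun t ht => Ioo_subset_Icc_self (A.ψ_mem t ht)
  have := hmaps.closure_of_continuousOn hcont
  rw [closure_Ioo A.T_pos.ne, isClosed_Icc.closure_eq] at this
  exact this ht

theorem sin_nonneg (A : IsReturnArc a μ T r u ψ) (ht : t ∈ Icc 0 T) : 0 ≤ sin (ψ t) :=
  sin_nonneg_of_mem_Icc (A.ψ_mem_Icc ht)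

theorem le_angleRate (A : IsReturnArc a μ T r u ψ) (ha : 0 ≤ a) (ht : t ∈ Icc 0 T) :
    cos (ψ t) * radialCoeff a (r t) + μ ≤ angleRate a μ (r t) (u t) (ψ t) :=
  GeneratingCurve.le_angleRate ha (A.r_pos ht) (A.u_mem ht) (A.sin_nonneg ht)

theorem continuousOn_u (A : IsReturnArc a μ T r u ψ) : ContinuousOn u (Icc 0 T) :=
  HasDerivAt.continuousOn fun t ht => (A.solves t ht).du

theorem strictAntiOn_r (A : IsReturnArc a μ T r u ψ) : StrictAntiOn r (Icc 0 T) := by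
  refine strictAntiOn_of_deriv_neg (convex_Icc 0 T)
    (HasDerivAt.continuousOn fun t ht => (A.solves t ht).dr) fun t ht => ?_
  rw [interior_Icc] at ht
  rw [(A.solves t (Ioo_subset_Icc_self ht)).dr.deriv]
  exact neg_neg_of_pos (sin_pos_of_mem_Ioo (A.ψ_mem t ht))

theorem r_le (A : IsReturnArc a μ T r u ψ) (hs : 0 ≤ s) (hst : s ≤ t) (ht : t ≤ T) : r t ≤ r s :=
  A.strictAntiOn_r.antitoneOn ⟨hs, hst.trans ht⟩ ⟨hs.trans hst, ht⟩ hst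

theorem r_sub_le (A : IsReturnArc a μ T r u ψ) (hs : 0 ≤ s) (hst : s ≤ t) (ht : t ≤ T) :
    r s - (t - s) ≤ r t := by
  have := le_of_hasDerivAt_nonneg hst
    (fun x hx => (A.solves x ⟨hs.trans hx.1, hx.2.trans ht⟩).dr.add (hasDerivAt_id x))
    (fun x _ => by linarith [sin_le_one (ψ x)])
  simp only [Pi.add_apply, id] at this
  linarith

theorem lyapunov_le (A : IsReturnArc a μ T r u ψ) (ha : 0 ≤ a) (ht : t ∈ Icc 0 T) :
    μ * t + (r t ^ 2 / 2 - (2 * a + 1)) * u t ≤ ψ t :=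
  have hsub : Icc 0 t ⊆ Icc 0 T := Icc_subset_Icc_right ht.2
  SolvesPolarAt.lyapunov_le ha ht.1 (fun x hx => A.solves x (hsub hx))
    (fun _ hx => A.u_mem (hsub hx)) (fun _ hx => A.sin_nonneg (hsub hx)) A.u_zero A.ψ_zero

theorem T_le (A : IsReturnArc a μ T r u ψ) (ha : 0 ≤ a) (hμ : 0 < μ) : T ≤ π / μ := by
  have hT := right_mem_Icc.2 A.T_pos.le
  have h := A.lyapunov_le ha hT
  rw [A.u_end, mul_zero, add_zero] at h
  rw [le_div_iff₀' hμ]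
  exact h.trans (A.ψ_mem_Icc hT).2

theorem exists_isTurningTime (A : IsReturnArc a μ T r u ψ) (ha : 0 ≤ a) (hμ : 0 < μ) :
    ∃ m, IsTurningTime T ψ m := by
  have hafter : ∀ s, 0 ≤ s → π / 2 ≤ ψ s → ∀ t ∈ Ioc s T, π / 2 < ψ t := fun s hs hψs =>
    lt_of_hasDerivAt_pos_of_eq (fun t ht => (A.solves t ⟨hs.trans ht.1, ht.2⟩).dψ) hψs
      fun t ht h => h ▸ angleRate_pi_div_two_pos ha hμ (A.r_pos ⟨hs.trans ht.1, ht.2⟩)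
        (A.u_mem ⟨hs.trans ht.1, ht.2⟩)
  obtain ⟨m, hm, hcos⟩ := exists_hasDerivAt_eq_zero A.T_pos A.continuousOn_u
    (A.u_zero.trans A.u_end.symm) (fun t ht => (A.solves t (Ioo_subset_Icc_self ht)).du)
  have hψm : ψ m = π / 2 := by
    rw [div_eq_zero_iff, or_iff_left (A.r_pos (Ioo_subset_Icc_self hm)).ne'] at hcos
    exact injOn_cos (Ioo_subset_Icc_self (A.ψ_mem m hm)) ⟨by positivity, by linarith [pi_pos]⟩
      (hcos.trans cos_pi_div_two.symm)
  refine ⟨m, hm, hψm, fun t ht => ?_, hafter m hm.1.le hψm.ge⟩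
  by_contra! h
  exact (hafter t ht.1 h m ⟨ht.2, hm.2.le⟩).ne' hψm

theorem cos_nonneg_of_le_turn (A : IsReturnArc a μ T r u ψ) (hm : IsTurningTime T ψ m)
    (ht : t ∈ Icc 0 m) : 0 ≤ cos (ψ t) := by
  refine cos_nonneg_of_mem_Icc
    ⟨by linarith [(A.ψ_mem_Icc (hm.left_subset ht)).1, pi_pos], ?_⟩
  rcases ht.2.eq_or_lt with rfl | h
  exacts [hm.eq.le, (hm.lt t ⟨ht.1, h⟩).le]

theorem cos_nonpos_of_turn_le (A : IsReturnArc a μ T r u ψ) (hm : IsTurningTime T ψ m)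
    (ht : t ∈ Icc m T) : cos (ψ t) ≤ 0 := by
  refine cos_nonpos_of_pi_div_two_le_of_le ?_
    (by linarith [(A.ψ_mem_Icc (hm.right_subset ht)).2, pi_pos])
  rcases ht.1.eq_or_lt with rfl | h
  exacts [hm.eq.ge, (hm.gt t ⟨h, ht.2⟩).le]

theorem monotoneOn_u (A : IsReturnArc a μ T r u ψ) (hm : IsTurningTime T ψ m) :
    MonotoneOn u (Icc 0 m) := fun _ hs _ ht hst =>
  le_of_hasDerivAt_nonneg hst
    (fun x hx => (A.solves x ⟨hs.1.trans hx.1, hx.2.trans (hm.left_subset ht).2⟩).du)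
    fun x hx =>
      have hxm : x ∈ Icc 0 m := ⟨hs.1.trans hx.1.le, hx.2.le.trans ht.2⟩
      div_nonneg (A.cos_nonneg_of_le_turn hm hxm) (A.r_pos (hm.left_subset hxm)).le

theorem antitoneOn_u (A : IsReturnArc a μ T r u ψ) (hm : IsTurningTime T ψ m) :
    AntitoneOn u (Icc m T) := fun _ hs _ ht hst =>
  neg_le_neg_iff.1 <| le_of_hasDerivAt_nonneg (f := fun x => -u x) hst
    (fun x hx => (A.solves x ⟨(hm.right_subset hs).1.trans hx.1, hx.2.trans ht.2⟩).du.neg)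
    fun x hx =>
      have hxm : x ∈ Icc m T := ⟨hs.1.trans hx.1.le, hx.2.le.trans ht.2⟩
      neg_nonneg.2 <| div_nonpos_of_nonpos_of_nonneg (A.cos_nonpos_of_turn_le hm hxm)
        (A.r_pos (hm.right_subset hxm)).le

theorem u_le_turn (A : IsReturnArc a μ T r u ψ) (hm : IsTurningTime T ψ m) (ht : t ∈ Icc 0 T) :
    u t ≤ u m := by
  rcases le_total t m with h | h
  · exact A.monotoneOn_u hm ⟨ht.1, h⟩ (right_mem_Icc.2 hm.mem.1.le) h
  · exact A.antitoneOn_u hm (left_mem_Icc.2 hm.mem.2.le) ⟨h, ht.2⟩ h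

end IsReturnArc

/-! ### A lower bound for the flux -/

theorem exists_pos_forall_le_quadratic {a μ : ℝ} (ha : 0 ≤ a) (hμ : 0 < μ) :
    ∃ k > 0, ∀ ρ ∈ Ioc 0 (neutralRadius a), k ≤ 2 * a + 1 - ρ ^ 2 / 2 + μ * ρ := by
  have hR := neutralRadius_pos ha
  refine ⟨min (2 * a + 1) (μ * neutralRadius a), by positivity, fun ρ hρ => ?_⟩
  -- The right-hand side is concave in `ρ`, so it lies above its chord over `[0, neutralRadius a]`.
  refine le_of_mul_le_mul_left ?_ hR
  set k := min (2 * a + 1) (μ * neutralRadius a)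
  calc neutralRadius a * k = (neutralRadius a - ρ) * k + ρ * k := by ring
    _ ≤ (neutralRadius a - ρ) * (2 * a + 1) + ρ * (μ * neutralRadius a) :=
        add_le_add (mul_le_mul_of_nonneg_left (min_le_left _ _) (sub_nonneg.2 hρ.2))
          (mul_le_mul_of_nonneg_left (min_le_right _ _) hρ.1.le)
    _ ≤ neutralRadius a * (2 * a + 1 - ρ ^ 2 / 2 + μ * ρ) := by
        have := mul_nonneg (mul_nonneg hρ.1.le hR.le) (sub_nonneg.2 hρ.2)
        linear_combination (1 / 2) * this + ρ / 2 * neutralRadius_sq ha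

theorem cos_pi_div_four_rpow_le {a u : ℝ} (ha : 0 ≤ a) (hu₀ : 0 ≤ u) (hu : u ≤ π / 8) :
    cos (π / 4) ^ a ≤ cos (2 * u) ^ a := by
  have hcos : cos (π / 4) ≤ cos (2 * u) :=
    cos_le_cos_of_nonneg_of_le_pi (by linarith) (by linarith [pi_pos]) (by linarith)
  have : 0 ≤ cos (π / 4) := by rw [cos_pi_div_four]; positivity
  gcongr

theorem cos_pi_div_four_rpow_pos (a : ℝ) : 0 < cos (π / 4) ^ a :=
  rpow_pos_of_pos (by rw [cos_pi_div_four]; positivity) a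

theorem IsTurningTime.flux_eq {a T m : ℝ} {u ψ : ℝ → ℝ} (hm : IsTurningTime T ψ m) :
    flux a (u m) (ψ m) = cos (2 * u m) ^ a := by
  simp [flux, hm.eq]

namespace IsReturnArc

variable {a μ T m s t : ℝ} {r u ψ : ℝ → ℝ}

theorem hasDerivAt_flux (A : IsReturnArc a μ T r u ψ) (ht : t ∈ Icc 0 T) :
    HasDerivAt (fun t => flux a (u t) (ψ t))
      (cos (ψ t) * cos (2 * u t) ^ a * (radialCoeff a (r t) * cos (ψ t) + μ)) t :=
  (A.solves t ht).hasDerivAt_flux (A.abs_u_lt ht)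

theorem ψ_add_le_of_turn_le (A : IsReturnArc a μ T r u ψ) (ha : 0 ≤ a) (hμ : 0 < μ)
    (hm : IsTurningTime T ψ m) {k : ℝ}
    (hk : ∀ ρ ∈ Ioc 0 (neutralRadius a), k ≤ 2 * a + 1 - ρ ^ 2 / 2 + μ * ρ) (hms : m ≤ s)
    (hst : s ≤ t) (ht : t ≤ T) (hr : r s ≤ neutralRadius a) :
    ψ s + k * u s ≤ ψ t + k * u t := by
  have hsub : Icc s t ⊆ Icc m T := Icc_subset_Icc hms ht
  refine le_of_hasDerivAt_nonneg (f := fun x => ψ x + k * u x) hst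
    (fun x hx => (A.solves x (hm.right_subset (hsub hx))).dψ.add
      ((A.solves x (hm.right_subset (hsub hx))).du.const_mul k)) fun x hx => ?_
  have hxm := hsub (Ioo_subset_Icc_self hx)
  have hxT := hm.right_subset hxm
  have hrx := A.r_pos hxT
  have hcos := A.cos_nonpos_of_turn_le hm hxm
  have hgap := hk (r x) ⟨hrx, (A.r_le (hm.mem.1.le.trans hms) hx.1.le hxT.2).trans hr⟩
  have hnonneg : 0 ≤ -cos (ψ x) / r x * (2 * a + 1 - r x ^ 2 / 2 + μ * r x - k) :=
    mul_nonneg (div_nonneg (neg_nonneg.2 hcos) hrx.le) (sub_nonneg.2 hgap)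
  have hexpand : -cos (ψ x) / r x * (2 * a + 1 - r x ^ 2 / 2 + μ * r x - k) =
      cos (ψ x) * radialCoeff a (r x) - μ * cos (ψ x) + k * (cos (ψ x) / r x) := by
    unfold radialCoeff
    field_simp
    ring
  have hμcos : 0 ≤ μ * (1 + cos (ψ x)) := mul_nonneg hμ.le (by linarith [neg_one_le_cos (ψ x)])
  linarith [A.le_angleRate ha hxT]

theorem antitoneOn_flux (A : IsReturnArc a μ T r u ψ) (ha : 0 ≤ a) (hμ : 0 < μ)
    (hm : IsTurningTime T ψ m) (hr : r m ≤ neutralRadius a) :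
    AntitoneOn (fun t => flux a (u t) (ψ t)) (Icc m T) := by
  intro s hs t ht hst
  refine neg_le_neg_iff.1 <| le_of_hasDerivAt_nonneg (f := fun x => -flux a (u x) (ψ x)) hst
    (fun x hx => (A.hasDerivAt_flux
      (hm.right_subset ⟨hs.1.trans hx.1, hx.2.trans ht.2⟩)).neg) fun x hx => ?_
  have hxm : x ∈ Icc m T := ⟨hs.1.trans hx.1.le, hx.2.le.trans ht.2⟩
  have hxT := hm.right_subset hxm
  have hcos := A.cos_nonpos_of_turn_le hm hxm
  have hcoeff : 0 ≤ radialCoeff a (r x) * cos (ψ x) := mul_nonneg_of_nonpos_of_nonpos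
    (radialCoeff_nonpos ha (A.r_pos hxT) ((A.r_le hm.mem.1.le hxm.1 hxT.2).trans hr)) hcos
  refine neg_nonneg.2 (mul_nonpos_of_nonpos_of_nonneg ?_ (by positivity))
  exact mul_nonpos_of_nonpos_of_nonneg hcos (rpow_nonneg (A.cos_two_mul_u_pos hxT).le a)

theorem mul_cos_le_deriv_flux (A : IsReturnArc a μ T r u ψ) (ha : 0 ≤ a)
    (hm : IsTurningTime T ψ m) (hr : neutralRadius a ≤ r m) (ht : t ∈ Icc 0 m) :
    μ * (cos (ψ t) * cos (2 * u t) ^ a) ≤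
      cos (ψ t) * cos (2 * u t) ^ a * (radialCoeff a (r t) * cos (ψ t) + μ) := by
  have htT := hm.left_subset ht
  have hcos := A.cos_nonneg_of_le_turn hm ht
  have hpow := rpow_nonneg (A.cos_two_mul_u_pos htT).le a
  have hcoeff := radialCoeff_nonneg ha (hr.trans (A.r_le ht.1 ht.2 hm.mem.2.le))
  rw [mul_comm μ]
  exact mul_le_mul_of_nonneg_left (le_add_of_nonneg_left (by positivity)) (by positivity)

theorem monotoneOn_flux (A : IsReturnArc a μ T r u ψ) (ha : 0 ≤ a) (hμ : 0 < μ)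
    (hm : IsTurningTime T ψ m) (hr : neutralRadius a ≤ r m) :
    MonotoneOn (fun t => flux a (u t) (ψ t)) (Icc 0 m) := by
  intro s hs t ht hst
  refine le_of_hasDerivAt_nonneg hst (fun x hx => A.hasDerivAt_flux
    (hm.left_subset ⟨hs.1.trans hx.1, hx.2.trans ht.2⟩)) fun x hx => ?_
  have hxm : x ∈ Icc 0 m := ⟨hs.1.trans hx.1.le, hx.2.le.trans ht.2⟩
  refine le_trans ?_ (A.mul_cos_le_deriv_flux ha hm hr hxm)
  have hcos := A.cos_nonneg_of_le_turn hm hxm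
  have hpow := A.cos_two_mul_u_pos (hm.left_subset hxm)
  positivity

theorem cos_rpow_ge_of_r_turn_le (A : IsReturnArc a μ T r u ψ) (ha : 0 ≤ a) (hμ : 0 < μ)
    (hm : IsTurningTime T ψ m) (hr : r m ≤ neutralRadius a) (hum : π / 8 ≤ u m) {k : ℝ}
    (hk₀ : 0 ≤ k) (hk : ∀ ρ ∈ Ioc 0 (neutralRadius a), k ≤ 2 * a + 1 - ρ ^ 2 / 2 + μ * ρ) :
    k / 4 * cos (π / 4) ^ a ≤ cos (2 * u m) ^ a := by
  obtain ⟨s, hs, hus⟩ : ∃ s ∈ Icc m T, u s = π / 8 :=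
    intermediate_value_Icc' hm.mem.2.le (A.continuousOn_u.mono hm.right_subset)
      ⟨A.u_end.le.trans (by positivity), hum⟩
  have hψs : π / 2 ≤ ψ s := by
    rcases hs.1.eq_or_lt with rfl | h
    exacts [hm.eq.ge, (hm.gt s ⟨h, hs.2⟩).le]
  have hgap : k * (π / 8) ≤ π - ψ s := by
    have h := A.ψ_add_le_of_turn_le ha hμ hm hk hs.1 hs.2 le_rfl
      ((A.r_le hm.mem.1.le hs.1 hs.2).trans hr)
    rw [A.u_end, hus] at h
    linarith [(A.ψ_mem_Icc (right_mem_Icc.2 A.T_pos.le)).2]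
  have hsin : k / 4 ≤ sin (ψ s) := calc
    k / 4 = 2 / π * (k * (π / 8)) := by field_simp; ring
    _ ≤ 2 / π * (π - ψ s) := by gcongr
    _ ≤ sin (π - ψ s) := mul_le_sin ((by positivity : 0 ≤ k * (π / 8)).trans hgap) (by linarith)
    _ = sin (ψ s) := sin_pi_sub _
  calc k / 4 * cos (π / 4) ^ a ≤ sin (ψ s) * cos (π / 4) ^ a :=
        mul_le_mul_of_nonneg_right hsin (cos_pi_div_four_rpow_pos a).le
    _ = flux a (u s) (ψ s) := by rw [flux, hus]; ring_nf
    _ ≤ flux a (u m) (ψ m) :=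
        A.antitoneOn_flux ha hμ hm hr (left_mem_Icc.2 hm.mem.2.le) hs hs.1
    _ = cos (2 * u m) ^ a := hm.flux_eq

theorem cos_rpow_ge_of_le_r_turn (A : IsReturnArc a μ T r u ψ) (ha : 0 ≤ a) (hμ : 0 < μ)
    (hm : IsTurningTime T ψ m) (hr : neutralRadius a ≤ r m) (hum : π / 8 ≤ u m) :
    μ * neutralRadius a * (π / 8) * cos (π / 4) ^ a ≤ cos (2 * u m) ^ a := by
  obtain ⟨s, hs, hus⟩ : ∃ s ∈ Icc 0 m, u s = π / 8 :=
    intermediate_value_Icc hm.mem.1.le (A.continuousOn_u.mono hm.left_subset)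
      ⟨A.u_zero.le.trans (by positivity), hum⟩
  set C := μ * neutralRadius a * cos (π / 4) ^ a with hC
  have hgrowth : flux a (u 0) (ψ 0) - C * u 0 ≤ flux a (u s) (ψ s) - C * u s := by
    refine le_of_hasDerivAt_nonneg hs.1 (fun x hx =>
      (A.hasDerivAt_flux (hm.left_subset ⟨hx.1, hx.2.trans hs.2⟩)).sub
        ((A.solves x (hm.left_subset ⟨hx.1, hx.2.trans hs.2⟩)).du.const_mul C)) fun x hx => ?_
    have hxm : x ∈ Icc 0 m := ⟨hx.1.le, hx.2.le.trans hs.2⟩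
    have hxT := hm.left_subset hxm
    have hcos := A.cos_nonneg_of_le_turn hm hxm
    have hpow := cos_pi_div_four_rpow_le ha (A.u_mem hxT).1
      (hus ▸ A.monotoneOn_u hm hxm hs hx.2.le)
    have hradius : neutralRadius a * (cos (ψ x) / r x) ≤ cos (ψ x) := by
      rw [mul_div_assoc', div_le_iff₀ (A.r_pos hxT), mul_comm]
      exact mul_le_mul_of_nonneg_left (hr.trans (A.r_le hxm.1 hxm.2 hm.mem.2.le)) hcos
    have hμpow : 0 ≤ μ * cos (π / 4) ^ a := (mul_pos hμ (cos_pi_div_four_rpow_pos a)).le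
    refine sub_nonneg.2 (le_trans ?_ (A.mul_cos_le_deriv_flux ha hm hr hxm))
    calc C * (cos (ψ x) / r x)
        = μ * cos (π / 4) ^ a * (neutralRadius a * (cos (ψ x) / r x)) := by rw [hC]; ring
      _ ≤ μ * cos (π / 4) ^ a * cos (ψ x) := mul_le_mul_of_nonneg_left hradius hμpow
      _ ≤ μ * (cos (ψ x) * cos (2 * u x) ^ a) := by
          rw [mul_assoc, mul_comm (cos (ψ x))]
          gcongr
  rw [A.u_zero, A.ψ_zero, hus] at hgrowth
  calc μ * neutralRadius a * (π / 8) * cos (π / 4) ^ a = C * (π / 8) := by rw [hC]; ring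
    _ ≤ flux a (u s) (ψ s) := by
        rw [hus]
        simp only [flux, sin_zero, zero_mul, mul_zero, sub_self] at hgrowth ⊢
        linarith
    _ ≤ flux a (u m) (ψ m) := A.monotoneOn_flux ha hμ hm hr hs (right_mem_Icc.2 hm.mem.1.le) hs.2
    _ = cos (2 * u m) ^ a := hm.flux_eq

theorem exists_pos_forall_le_cos_turn_rpow (ha : 0 ≤ a) (hμ : 0 < μ) :
    ∃ c > 0, ∀ {T m : ℝ} {r u ψ : ℝ → ℝ}, IsReturnArc a μ T r u ψ → IsTurningTime T ψ m →
      c ≤ cos (2 * u m) ^ a := by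
  obtain ⟨k, hk₀, hk⟩ := exists_pos_forall_le_quadratic ha hμ
  have hpow := cos_pi_div_four_rpow_pos a
  have hR := neutralRadius_pos ha
  refine ⟨min (cos (π / 4) ^ a) (min (k / 4 * cos (π / 4) ^ a)
    (μ * neutralRadius a * (π / 8) * cos (π / 4) ^ a)), by positivity, fun {T m r u ψ} A hm => ?_⟩
  rcases le_total (u m) (π / 8) with hum | hum
  · exact (min_le_left _ _).trans
      (cos_pi_div_four_rpow_le ha (A.u_mem (Ioo_subset_Icc_self hm.mem)).1 hum)
  rcases le_total (r m) (neutralRadius a) with hr | hr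
  · exact (min_le_right _ _).trans <| (min_le_left _ _).trans
      (A.cos_rpow_ge_of_r_turn_le ha hμ hm hr hum hk₀.le hk)
  · exact (min_le_right _ _).trans <| (min_le_right _ _).trans
      (A.cos_rpow_ge_of_le_r_turn ha hμ hm hr hum)

theorem exists_pos_forall_le_cos_two_mul_u (ha : 0 < a) (hμ : 0 < μ) :
    ∃ c > 0, ∀ {T : ℝ} {r u ψ : ℝ → ℝ}, IsReturnArc a μ T r u ψ →
      ∀ t ∈ Icc 0 T, c ≤ cos (2 * u t) := by
  obtain ⟨c, hc, hbound⟩ := exists_pos_forall_le_cos_turn_rpow ha.le hμ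
  refine ⟨c ^ a⁻¹, rpow_pos_of_pos hc _, fun {T r u ψ} A t ht => ?_⟩
  obtain ⟨m, hm⟩ := A.exists_isTurningTime ha.le hμ
  have hmT := Ioo_subset_Icc_self hm.mem
  calc c ^ a⁻¹ ≤ cos (2 * u m) :=
        (rpow_inv_le_iff_of_pos hc.le (A.cos_two_mul_u_pos hmT).le ha).2 (hbound A hm)
    _ ≤ cos (2 * u t) := cos_le_cos_of_nonneg_of_le_pi (by linarith [(A.u_mem ht).1])
        (by linarith [(A.u_mem hmT).2, pi_pos]) (by linarith [A.u_le_turn hm ht])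

end IsReturnArc

/-! ### No return arc starts close to the circle solution -/

/-- The distances to the origin from which a return arc starts. -/
def returnRadii (a μ : ℝ) : Set ℝ :=
  {r₀ | ∃ (T : ℝ) (r u ψ : ℝ → ℝ), IsReturnArc a μ T r u ψ ∧ r 0 = r₀}

theorem deriv_flux_le {a μ δ r u ψ : ℝ} (ha : 0 ≤ a) (hμ : 0 ≤ μ) (hr₀ : 0 < r)
    (hr : r ≤ neutralRadius a) (hu : |u| < π / 4) (hcos : 0 ≤ cos ψ) (hsin : 0 ≤ sin ψ)
    (hδ : 0 ≤ δ) (hcoeff : radialCoeff a r + μ ≤ δ) :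
    cos ψ * cos (2 * u) ^ a * (radialCoeff a r * cos ψ + μ) ≤
      neutralRadius a * (cos ψ / r) * (μ * flux a u ψ + δ) := by
  set w := cos (2 * u) ^ a with hw
  have hw₀ : 0 ≤ w := rpow_nonneg (cos_two_mul_pos hu).le a
  have hw₁ : w ≤ 1 := rpow_le_one (cos_two_mul_pos hu).le (cos_le_one _) ha
  have hradius : cos ψ ≤ neutralRadius a * (cos ψ / r) := by
    rw [mul_div_assoc', le_div_iff₀ hr₀, mul_comm]
    exact mul_le_mul_of_nonneg_right hr hcos
  have hone : 1 ≤ cos ψ + sin ψ := by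
    nlinarith [sin_sq_add_cos_sq ψ, mul_nonneg hcos hsin]
  have hbracket : radialCoeff a r * cos ψ + μ ≤ μ * sin ψ + δ := by
    nlinarith [mul_le_mul_of_nonneg_right hcoeff hcos, mul_le_mul_of_nonneg_left hone hμ,
      mul_le_mul_of_nonneg_left (cos_le_one ψ) hδ]
  calc cos ψ * w * (radialCoeff a r * cos ψ + μ) ≤ cos ψ * w * (μ * sin ψ + δ) := by gcongr
    _ = cos ψ * (μ * flux a u ψ + w * δ) := by rw [flux, ← hw]; ring
    _ ≤ cos ψ * (μ * flux a u ψ + δ) := by gcongr; exact mul_le_of_le_one_left hδ hw₁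
    _ ≤ neutralRadius a * (cos ψ / r) * (μ * flux a u ψ + δ) := by
        have : 0 ≤ flux a u ψ := mul_nonneg hsin hw₀
        gcongr

/-- Gronwall's inequality for `μ * flux + radialCoeff a (r 0) + μ` as a function of `u` up to the
turning time. -/
theorem IsReturnArc.mul_cos_turn_rpow_add_le {a μ T m : ℝ} {r u ψ : ℝ → ℝ}
    (A : IsReturnArc a μ T r u ψ) (ha : 0 ≤ a) (hμ : 0 < μ) (hm : IsTurningTime T ψ m)
    (hr : r 0 ≤ neutralRadius a) {δ : ℝ} (hδ : 0 ≤ δ) (hcoeff : radialCoeff a (r 0) + μ = δ) :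
    μ * cos (2 * u m) ^ a + δ ≤ δ * exp (μ * neutralRadius a * (π / 4)) := by
  set b := μ * neutralRadius a
  have hdecay : (μ * flux a (u m) (ψ m) + δ) * exp (-(b * u m)) ≤
      (μ * flux a (u 0) (ψ 0) + δ) * exp (-(b * u 0)) := by
    refine neg_le_neg_iff.1 <| le_of_hasDerivAt_nonneg
      (f := fun t => -((μ * flux a (u t) (ψ t) + δ) * exp (-(b * u t)))) hm.mem.1.le
      (fun x hx => ((((A.hasDerivAt_flux (hm.left_subset hx)).const_mul μ).add_const δ).mul
        (((A.solves x (hm.left_subset hx)).du.const_mul b).neg.exp)).neg) fun x hx => ?_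
    have hxm := Ioo_subset_Icc_self hx
    have hxT := hm.left_subset hxm
    have hrx := A.r_le le_rfl hx.1.le hxT.2
    have hrate := deriv_flux_le ha hμ.le (A.r_pos hxT) (hrx.trans hr) (A.abs_u_lt hxT)
      (A.cos_nonneg_of_le_turn hm hxm) (A.sin_nonneg hxT) hδ
      (by linarith [radialCoeff_le_radialCoeff ha (A.r_pos hxT) hrx])
    have := mul_nonneg (mul_nonneg hμ.le (sub_nonneg.2 hrate)) (exp_pos (-(b * u x))).le
    linear_combination this
  have hR := neutralRadius_pos ha
  have hum : exp (b * u m) ≤ exp (b * (π / 4)) := by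
    have := (A.u_mem (Ioo_subset_Icc_self hm.mem)).2
    gcongr
  rw [hm.flux_eq, A.u_zero, A.ψ_zero, exp_neg, ← div_eq_mul_inv, div_le_iff₀ (exp_pos _)] at hdecay
  simp only [flux, sin_zero, zero_mul, mul_zero, neg_zero, exp_zero, zero_add, mul_one] at hdecay
  exact hdecay.trans (mul_le_mul_of_nonneg_left hum hδ)

theorem exists_radialCoeff_eq_neg {a s : ℝ} (ha : 0 ≤ a) (hs : 0 ≤ s) :
    ∃ r ∈ Ioc 0 (neutralRadius a), radialCoeff a r = -s := by
  have hR := neutralRadius_pos ha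
  have hRsq := neutralRadius_sq ha
  have hroot := sq_sqrt (by positivity : 0 ≤ s ^ 2 + neutralRadius a ^ 2)
  have hpos : s < √(s ^ 2 + neutralRadius a ^ 2) := lt_sqrt_of_sq_lt (by nlinarith)
  have hle : √(s ^ 2 + neutralRadius a ^ 2) ≤ s + neutralRadius a :=
    sqrt_le_iff.2 ⟨by positivity, by nlinarith⟩
  refine ⟨√(s ^ 2 + neutralRadius a ^ 2) - s, ⟨sub_pos.2 hpos, by linarith⟩, ?_⟩
  have := (sub_pos.2 hpos).ne'
  rw [radialCoeff]
  field_simp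
  linear_combination hroot + hRsq

theorem exists_notMem_returnRadii {a μ : ℝ} (ha : 0 ≤ a) (hμ : 0 < μ) :
    ∃ r₀ > 0, 0 < radialCoeff a r₀ + μ ∧ r₀ ∉ returnRadii a μ := by
  obtain ⟨c, hc, hflux⟩ := IsReturnArc.exists_pos_forall_le_cos_turn_rpow ha hμ
  set δ := min μ (μ * c / exp (μ * neutralRadius a * (π / 4)))
  have hδ₀ : 0 < δ := by positivity
  obtain ⟨r₀, ⟨hr₀, hr₀R⟩, hcoeff⟩ :=
    exists_radialCoeff_eq_neg ha (sub_nonneg.2 (min_le_left μ _) : 0 ≤ μ - δ)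
  refine ⟨r₀, hr₀, by linarith, ?_⟩
  rintro ⟨T, r, u, ψ, A, rfl⟩
  obtain ⟨m, hm⟩ := A.exists_isTurningTime ha hμ
  have hupper := A.mul_cos_turn_rpow_add_le ha hμ hm hr₀R hδ₀.le (by linarith)
  have hsmall : δ * exp (μ * neutralRadius a * (π / 4)) ≤ μ * c :=
    (le_div_iff₀ (exp_pos _)).1 (min_le_right _ _)
  linarith [mul_le_mul_of_nonneg_left (hflux A hm) hμ.le]

/-! ### Return arcs stay away from the singularities -/

theorem mul_exp_neg_le_of_log_sub_log_le {c x y : ℝ} (hx : 0 < x) (hy : 0 < y)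
    (h : log x - log y ≤ c) : x * exp (-c) ≤ y := by
  rw [← log_le_log_iff (by positivity) hy, log_mul hx.ne' (exp_pos _).ne', log_exp]
  linarith

theorem angleRate_le {a μ ρ L c r u ψ : ℝ} (ha : 0 ≤ a) (hρ : 0 < ρ) (hr : r ∈ Icc ρ L)
    (hc : 0 < c) (hu : u ∈ Ico 0 (π / 4)) (hcu : c ≤ cos (2 * u)) (hψ : 0 ≤ sin ψ) :
    angleRate a μ r u ψ ≤ L / 2 + (2 * a + 1) / ρ + μ + 2 * a / ρ * (1 / c) := by
  have hr₀ := hρ.trans_le hr.1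
  have htan₀ := tan_two_mul_nonneg hu
  have htan : tan (2 * u) ≤ 1 / c := by
    rw [tan_eq_sin_div_cos]
    have := sin_le_one (2 * u)
    gcongr
  have hcoeff : |radialCoeff a r| ≤ L / 2 + (2 * a + 1) / ρ := by
    have hinv : (2 * a + 1) / r ≤ (2 * a + 1) / ρ := by gcongr; exact hr.1
    have : 0 < (2 * a + 1) / r := by positivity
    rw [radialCoeff, abs_le]
    constructor <;> linarith [hr.2]
  have hsingular : 2 * a / r * tan (2 * u) * sin ψ ≤ 2 * a / ρ * (1 / c) * 1 := by
    gcongr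
    exacts [hr.1, sin_le_one ψ]
  have hregular : cos ψ * radialCoeff a r ≤ L / 2 + (2 * a + 1) / ρ := by
    refine ((le_abs_self _).trans (abs_mul _ _).le).trans ?_
    exact (mul_le_of_le_one_left (abs_nonneg _) (abs_cos_le_one ψ)).trans hcoeff
  unfold angleRate
  linarith

namespace IsReturnArc

variable {a μ T m s t : ℝ} {r u ψ : ℝ → ℝ}

theorem hasDerivAt_log_r (A : IsReturnArc a μ T r u ψ) (ht : t ∈ Icc 0 T) :
    HasDerivAt (fun t => log (r t)) (-sin (ψ t) / r t) t :=
  (A.solves t ht).dr.log (A.r_pos ht).ne'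

theorem continuousOn_r (A : IsReturnArc a μ T r u ψ) : ContinuousOn r (Icc 0 T) :=
  HasDerivAt.continuousOn fun t ht => (A.solves t ht).dr

theorem ψ_le_mul (A : IsReturnArc a μ T r u ψ) {B : ℝ} (ht : t ∈ Icc 0 T)
    (hB : ∀ x ∈ Icc 0 t, angleRate a μ (r x) (u x) (ψ x) ≤ B) : ψ t ≤ B * t := by
  have hmono := le_of_hasDerivAt_nonneg (f := fun x => B * x - ψ x) ht.1
    (fun x hx => ((hasDerivAt_id x).const_mul B).sub (A.solves x ⟨hx.1, hx.2.trans ht.2⟩).dψ)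
    (fun x hx => by linarith [hB x (Ioo_subset_Icc_self hx)])
  simp only [A.ψ_zero, mul_zero, sub_zero] at hmono
  linarith

theorem div_le_u (A : IsReturnArc a μ T r u ψ) {L : ℝ} (ht : t ∈ Icc 0 T) (hL : r 0 ≤ L)
    (hψ : ∀ x ∈ Icc 0 t, ψ x ≤ π / 3) : t / (2 * L) ≤ u t := by
  have hmono := le_of_hasDerivAt_nonneg (f := fun x => u x - 1 / 2 / L * x) ht.1
    (fun x hx => (A.solves x ⟨hx.1, hx.2.trans ht.2⟩).du.sub
      ((hasDerivAt_id x).const_mul (1 / 2 / L))) (fun x hx => ?_)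
  · simp only [A.u_zero, mul_zero, sub_zero] at hmono
    calc t / (2 * L) = 1 / 2 / L * t := by ring
      _ ≤ u t := sub_nonneg.1 hmono
  have hxT : x ∈ Icc 0 T := ⟨hx.1.le, hx.2.le.trans ht.2⟩
  have hcos : 1 / 2 ≤ cos (ψ x) := cos_pi_div_three ▸ cos_le_cos_of_nonneg_of_le_pi
    (A.ψ_mem_Icc hxT).1 (by linarith [pi_pos]) (hψ x (Ioo_subset_Icc_self hx))
  have hr := A.r_pos hxT
  have hrL := (A.r_le le_rfl hxT.1 hxT.2).trans hL
  rw [mul_one, sub_nonneg]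
  gcongr

theorem exists_pos_forall_le_u (ha : 0 < a) (hμ : 0 < μ) {ρ L : ℝ} (hρ : 0 < ρ) (hL : 0 < L) :
    ∃ t₀ > 0, ∃ u₀ > 0, ∀ {T m : ℝ} {r u ψ : ℝ → ℝ}, IsReturnArc a μ T r u ψ →
      IsTurningTime T ψ m → r 0 ∈ Icc (2 * ρ) L → t₀ < m ∧ ρ ≤ r t₀ ∧ u₀ ≤ u t₀ := by
  obtain ⟨c, hc, hcu⟩ := exists_pos_forall_le_cos_two_mul_u ha hμ
  set B := L / 2 + (2 * a + 1) / ρ + μ + 2 * a / ρ * (1 / c)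
  have hB : 0 < B := by positivity
  refine ⟨min ρ (π / 3 / B), by positivity, min ρ (π / 3 / B) / (2 * L), by positivity,
    fun {T m r u ψ} A hm hr₀ => ?_⟩
  set t₀ := min ρ (π / 3 / B)
  have ht₀ : B * t₀ ≤ π / 3 := (le_div_iff₀' hB).1 (min_le_right _ _)
  have hr : ∀ t ∈ Icc 0 T, t ≤ t₀ → ρ ≤ r t := fun t ht htt => by
    linarith [A.r_sub_le le_rfl ht.1 ht.2, hr₀.1, htt.trans (min_le_left _ _)]
  have hψ : ∀ t ∈ Icc 0 T, t ≤ t₀ → ψ t ≤ π / 3 := fun t ht htt => by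
    refine (A.ψ_le_mul ht (B := B) fun x hx => ?_).trans
      ((mul_le_mul_of_nonneg_left htt hB.le).trans ht₀)
    have hxT : x ∈ Icc 0 T := ⟨hx.1, hx.2.trans ht.2⟩
    exact angleRate_le ha.le hρ
      ⟨hr x hxT (hx.2.trans htt), (A.r_le le_rfl hxT.1 hxT.2).trans hr₀.2⟩ hc (A.u_mem hxT)
      (hcu A x hxT) (A.sin_nonneg hxT)
  have ht₀m : t₀ < m := by
    by_contra! h
    linarith [hψ m (Ioo_subset_Icc_self hm.mem) h, hm.eq, pi_pos]
  have ht₀T : t₀ ∈ Icc 0 T := ⟨by positivity, ht₀m.le.trans hm.mem.2.le⟩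
  exact ⟨ht₀m, hr t₀ ht₀T le_rfl, A.div_le_u ht₀T hr₀.2 fun x hx =>
    hψ x ⟨hx.1, hx.2.trans ht₀T.2⟩ hx.2⟩

/-- The potential is `ψ + (2a + 1) u + 4a (u s) log r`: the tangent term of `angleRate` dominates
the decay of the logarithm. -/
theorem log_r_sub_log_r_turn_le (A : IsReturnArc a μ T r u ψ) (ha : 0 < a) (hμ : 0 < μ)
    (hm : IsTurningTime T ψ m) (hs : s ∈ Icc 0 m) (hus : 0 < u s) :
    log (r s) - log (r m) ≤ (π / 2 + (2 * a + 1) * (π / 4)) / (4 * a * u s) := by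
  have hsT := hm.left_subset hs
  have hsub : Icc s m ⊆ Icc 0 T := (Icc_subset_Icc_left hs.1).trans hm.left_subset
  have hmono := le_of_hasDerivAt_nonneg
    (f := fun x => ψ x + (2 * a + 1) * u x + 4 * a * u s * log (r x)) hs.2
    (fun x hx => ((A.solves x (hsub hx)).dψ.add ((A.solves x (hsub hx)).du.const_mul _)).add
      ((A.hasDerivAt_log_r (hsub hx)).const_mul _)) (fun x hx => ?_)
  · rw [le_div_iff₀ (by positivity)]
    have hu : (2 * a + 1) * u m ≤ (2 * a + 1) * (π / 4) := by
      have := A.u_lt m (Ioo_subset_Icc_self hm.mem)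
      gcongr
    have : 0 ≤ (2 * a + 1) * u s := by positivity
    linarith [hm.eq, (A.ψ_mem_Icc hsT).1]
  have hxI := Ioo_subset_Icc_self hx
  have hxT := hsub hxI
  have hr := A.r_pos hxT
  have hcos := A.cos_nonneg_of_le_turn hm ⟨hxT.1, hx.2.le⟩
  have hsin := A.sin_nonneg hxT
  have hux : u s ≤ u x := A.monotoneOn_u hm hs ⟨hxT.1, hx.2.le⟩ hx.1.le
  have htan : 2 * u s ≤ tan (2 * u x) :=
    (by gcongr : 2 * u s ≤ 2 * u x).trans (le_tan (by linarith) (by linarith [A.u_lt x hxT]))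
  calc 0 ≤ cos (ψ x) * (r x / 2) + μ
        + 2 * a / r x * (tan (2 * u x) - 2 * u s) * sin (ψ x) := by
        have := sub_nonneg.2 htan
        positivity
    _ = _ := by
        unfold angleRate radialCoeff
        ring

theorem ψ_add_mul_le_of_turn_le (A : IsReturnArc a μ T r u ψ) (ha : 0 ≤ a)
    (hm : IsTurningTime T ψ m) (hms : m ≤ s) (hst : s ≤ t) (ht : t ≤ T)
    (hr : r s ≤ neutralRadius a) : ψ s + μ * (t - s) ≤ ψ t := by
  have hs := hm.mem.1.le.trans hms
  have hsub : Icc s t ⊆ Icc 0 T := Icc_subset_Icc hs ht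
  have hmono := le_of_hasDerivAt_nonneg (f := fun x => ψ x - μ * x) hst
    (fun x hx => (A.solves x (hsub hx)).dψ.sub ((hasDerivAt_id x).const_mul μ)) fun x hx => by
      have hxT := hsub (Ioo_subset_Icc_self hx)
      have hprod := mul_nonneg_of_nonpos_of_nonpos
        (A.cos_nonpos_of_turn_le hm ⟨hms.trans hx.1.le, hxT.2⟩)
        (radialCoeff_nonpos ha (A.r_pos hxT) ((A.r_le hs hx.1.le hxT.2).trans hr))
      linarith [A.le_angleRate ha hxT]
  linarith

/-- The potential is `sin δ * log r - u`. -/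
theorem log_r_sub_log_r_le (A : IsReturnArc a μ T r u ψ) {δ : ℝ} (hδ : δ ∈ Ioc 0 (π / 2))
    (hs : 0 ≤ s) (hst : s ≤ t) (ht : t ≤ T) (hψ : ∀ x ∈ Icc s t, π / 2 + δ ≤ ψ x) :
    log (r s) - log (r t) ≤ π / 4 / sin δ := by
  have hsinδ : 0 < sin δ := sin_pos_of_pos_of_lt_pi hδ.1 (by linarith [hδ.2, pi_pos])
  have hsub : Icc s t ⊆ Icc 0 T := Icc_subset_Icc hs ht
  have hmono := le_of_hasDerivAt_nonneg (f := fun x => sin δ * log (r x) - u x) hst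
    (fun x hx => ((A.hasDerivAt_log_r (hsub hx)).const_mul _).sub (A.solves x (hsub hx)).du)
    fun x hx => ?_
  · rw [le_div_iff₀ hsinδ]
    linarith [A.u_lt s ⟨hs, hst.trans ht⟩, (A.u_mem ⟨hs.trans hst, ht⟩).1]
  have hxT := hsub (Ioo_subset_Icc_self hx)
  have hcos : sin δ ≤ -cos (ψ x) := by
    rw [← sin_sub_pi_div_two]
    exact sin_le_sin_of_le_of_le_pi_div_two (by linarith [hδ.1, pi_pos])
      (by linarith [(A.ψ_mem_Icc hxT).2]) (by linarith [hψ x (Ioo_subset_Icc_self hx)])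
  have hsin : sin δ * sin (ψ x) ≤ sin δ := mul_le_of_le_one_right hsinδ.le (sin_le_one _)
  calc 0 ≤ (-cos (ψ x) - sin δ * sin (ψ x)) / r x :=
        div_nonneg (by linarith) (A.r_pos hxT).le
    _ = _ := by ring

theorem half_mul_exp_le_r (A : IsReturnArc a μ T r u ψ) (ha : 0 ≤ a) (hμ : 0 < μ)
    (hm : IsTurningTime T ψ m) (hms : m ≤ s) (hst : s ≤ t) (ht : t ≤ T)
    (hr : r s ≤ neutralRadius a) :
    r s / 2 * exp (-(π / 4 / sin (min (μ * (r s / 2)) (π / 2)))) ≤ r t := by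
  have hs := hm.mem.1.le.trans hms
  have hrs := A.r_pos ⟨hs, hst.trans ht⟩
  set δ := min (μ * (r s / 2)) (π / 2)
  have hδ : δ ∈ Ioc 0 (π / 2) := ⟨by positivity, min_le_right _ _⟩
  have hsinδ : 0 < sin δ := sin_pos_of_pos_of_lt_pi hδ.1 (by linarith [hδ.2, pi_pos])
  rcases le_total t (s + r s / 2) with hts | hts
  · have hexp : exp (-(π / 4 / sin δ)) ≤ 1 := exp_le_one_iff.2 (neg_nonpos.2 (by positivity))
    have := mul_le_of_le_one_right (half_pos hrs).le hexp
    linarith [A.r_sub_le hs hst ht]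
  obtain ⟨s', hs'⟩ : ∃ s', s' = s + r s / 2 := ⟨_, rfl⟩
  rw [← hs'] at hts
  have hss' : s ≤ s' := by linarith
  have hψs : π / 2 ≤ ψ s := by
    rcases hms.eq_or_lt with rfl | h
    exacts [hm.eq.ge, (hm.gt s ⟨h, hst.trans ht⟩).le]
  have hψ : ∀ x ∈ Icc s' t, π / 2 + δ ≤ ψ x := fun x hx => by
    have hgrow := A.ψ_add_mul_le_of_turn_le ha hm hms (hss'.trans hx.1) (hx.2.trans ht) hr
    have : μ * (r s / 2) ≤ μ * (x - s) := by gcongr; linarith [hx.1]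
    linarith [min_le_left (μ * (r s / 2)) (π / 2)]
  have hlog := A.log_r_sub_log_r_le hδ (hs.trans hss') hts ht hψ
  have hrs' : r s / 2 ≤ r s' := by linarith [A.r_sub_le hs hss' (hts.trans ht)]
  calc r s / 2 * exp (-(π / 4 / sin δ)) ≤ r s' * exp (-(π / 4 / sin δ)) := by gcongr
    _ ≤ r t := mul_exp_neg_le_of_log_sub_log_le (A.r_pos ⟨hs.trans hss', hts.trans ht⟩)
        (A.r_pos ⟨hs.trans hst, ht⟩) hlog

theorem exists_pos_forall_le_r (ha : 0 < a) (hμ : 0 < μ) {ρ L : ℝ} (hρ : 0 < ρ) (hL : 0 < L) :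
    ∃ t₀ > 0, ∃ ρ₀ > 0, ∀ {T : ℝ} {r u ψ : ℝ → ℝ}, IsReturnArc a μ T r u ψ →
      r 0 ∈ Icc ρ L → t₀ ≤ T ∧ ∀ t ∈ Icc 0 T, ρ₀ ≤ r t := by
  obtain ⟨t₀, ht₀, u₀, hu₀, hearly⟩ := exists_pos_forall_le_u ha hμ (half_pos hρ) hL
  have hR := neutralRadius_pos ha.le
  set ρ₁ := min (ρ / 2 * exp (-((π / 2 + (2 * a + 1) * (π / 4)) / (4 * a * u₀))))
    (neutralRadius a)
  have hρ₁pos : 0 < ρ₁ := by positivity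
  set ρ₂ := ρ₁ / 2 * exp (-(π / 4 / sin (min (μ * (ρ₁ / 2)) (π / 2))))
  refine ⟨t₀, ht₀, min ρ₁ ρ₂, lt_min hρ₁pos (by positivity), fun {T r u ψ} A hr₀ => ?_⟩
  obtain ⟨m, hm⟩ := A.exists_isTurningTime ha.le hμ
  rw [← mul_div_cancel₀ ρ two_ne_zero] at hr₀
  obtain ⟨ht₀m, hrt₀, hut₀⟩ := hearly A hm hr₀
  have hmT := hm.mem.2.le
  have hmI : m ∈ Icc 0 T := Ioo_subset_Icc_self hm.mem
  have hturn : ρ₁ ≤ r m := by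
    have hlog : log (r t₀) - log (r m) ≤ (π / 2 + (2 * a + 1) * (π / 4)) / (4 * a * u₀) :=
      (A.log_r_sub_log_r_turn_le ha hμ hm ⟨ht₀.le, ht₀m.le⟩ (hu₀.trans_le hut₀)).trans
        (by gcongr)
    refine (min_le_left _ _).trans (le_trans (by gcongr) (mul_exp_neg_le_of_log_sub_log_le
      (A.r_pos ⟨ht₀.le, ht₀m.le.trans hmT⟩) (A.r_pos hmI) hlog))
  refine ⟨ht₀m.le.trans hmT, fun t ht => ?_⟩
  by_contra! hrt
  rw [lt_min_iff] at hrt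
  have hmt : m ≤ t := by
    by_contra! h
    exact (hturn.trans (A.r_le ht.1 h.le hmT)).not_gt hrt.1
  obtain ⟨s, hs, hrs⟩ : ∃ s ∈ Icc m t, r s = ρ₁ := intermediate_value_Icc' hmt
    (A.continuousOn_r.mono (Icc_subset_Icc hm.mem.1.le ht.2)) ⟨hrt.1.le, hturn⟩
  have hlower := A.half_mul_exp_le_r ha.le hμ hm hs.1 hs.2 ht.2 (hrs ▸ min_le_right _ _)
  rw [hrs] at hlower
  exact hlower.not_gt hrt.2

end IsReturnArc

/-- The range of a truncation of the generating system away from its singularities: `r` lies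
between `ρ` and `M`, and `|u|` is at most `κ`. -/
structure ClampBox where
  ρ : ℝ
  M : ℝ
  κ : ℝ
  ρ_pos : 0 < ρ
  ρ_le : ρ ≤ M
  κ_pos : 0 < κ
  κ_lt : κ < π / 4

namespace ClampBox

/-- The points `(r, u, ψ)` at which the truncation agrees with the generating system on a
neighbourhood. -/
def inner (B : ClampBox) : Set (ℝ × ℝ × ℝ) :=
  Ioo B.ρ B.M ×ˢ Ioo (-B.κ) B.κ ×ˢ univ

end ClampBox

theorem exists_clampBox {a μ ρ L : ℝ} (ha : 0 < a) (hμ : 0 < μ) (hρ : 0 < ρ) (hL : 0 < L) :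
    ∃ t₀ > 0, ∃ B : ClampBox, ∀ {T : ℝ} {r u ψ : ℝ → ℝ}, IsReturnArc a μ T r u ψ →
      r 0 ∈ Icc ρ L → t₀ ≤ T ∧ ∀ t ∈ Icc 0 T, (r t, u t, ψ t) ∈ B.inner := by
  obtain ⟨t₀, ht₀, ρ₀, hρ₀, hr⟩ := IsReturnArc.exists_pos_forall_le_r ha hμ hρ hL
  obtain ⟨c, hc, hcu⟩ := IsReturnArc.exists_pos_forall_le_cos_two_mul_u ha hμ
  have hκ₀ := arccos_nonneg c
  have hκ₁ : arccos c < π / 2 := arccos_lt_pi_div_two.2 hc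
  refine ⟨t₀, ht₀, ⟨ρ₀ / 2, max (ρ₀ / 2) (L + 1), arccos c / 4 + π / 8, by positivity,
    le_max_left _ _, by positivity, by linarith⟩, fun {T r u ψ} A hr₀ => ?_⟩
  refine ⟨(hr A hr₀).1, fun t ht => ⟨⟨?_, ?_⟩, ⟨?_, ?_⟩, trivial⟩⟩
  · exact (half_lt_self hρ₀).trans_le ((hr A hr₀).2 t ht)
  · refine lt_max_of_lt_right ?_
    linarith [A.r_le le_rfl ht.1 ht.2, hr₀.2]
  · linarith [(A.u_mem ht).1, pi_pos]
  · have hu : 2 * u t ≤ arccos c := by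
      rw [← arccos_cos (x := 2 * u t) (by linarith [(A.u_mem ht).1])
        (by linarith [(A.u_mem ht).2, pi_pos])]
      exact antitone_arccos (hcu A t ht)
    change u t < arccos c / 4 + π / 8
    linarith

/-! ### The truncated system -/

theorem exists_lipschitzWith_comp_of_contDiffAt {X E F : Type*} [PseudoMetricSpace X]
    [NormedAddCommGroup E] [NormedSpace ℝ E] [NormedAddCommGroup F] [NormedSpace ℝ F]
    {f : E → F} {g : X → E} {S : Set E} {C : ℝ≥0} (hS : IsCompact S)
    (hf : ∀ z ∈ S, ContDiffAt ℝ 1 f z) (hg : LipschitzWith C g) (hgS : ∀ x, g x ∈ S) :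
    ∃ K L : ℝ≥0, LipschitzWith K (f ∘ g) ∧ ∀ x, ‖f (g x)‖ ≤ L := by
  obtain ⟨K, hK⟩ := LocallyLipschitzOn.exists_lipschitzOnWith_of_compact (f := f) hS fun z hz => by
    obtain ⟨K, t, ht, hK⟩ := (hf z hz).exists_lipschitzOnWith
    exact ⟨K, t, mem_nhdsWithin_of_mem_nhds ht, hK⟩
  obtain ⟨L, hL⟩ := hS.exists_bound_of_continuousOn hK.continuousOn
  refine ⟨K * C, L.toNNReal, ?_, fun x => (hL _ (hgS x)).trans (le_coe_toNNReal L)⟩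
  rw [← lipschitzOnWith_univ] at hg ⊢
  exact hK.comp hg fun x _ => hgS x

/-- The vector field of the generating system in the coordinates `(r, u, ψ)`. -/
noncomputable def polarField (a μ : ℝ) (z : ℝ × ℝ × ℝ) : ℝ × ℝ × ℝ :=
  (-sin z.2.2, cos z.2.2 / z.1, angleRate a μ z.1 z.2.1 z.2.2)

namespace ClampBox

/-- The truncation of `(r, u, ψ)` in `r` and `u`. -/
noncomputable def clamp (B : ClampBox) (z : ℝ × ℝ × ℝ) : ℝ × ℝ × ℝ :=
  (max B.ρ (min B.M z.1), max (-B.κ) (min B.κ z.2.1), z.2.2)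

variable (B : ClampBox) {z : ℝ × ℝ × ℝ}

theorem clamp_fst_mem (z : ℝ × ℝ × ℝ) : (B.clamp z).1 ∈ Icc B.ρ B.M :=
  ⟨le_max_left _ _, max_le B.ρ_le (min_le_left _ _)⟩

theorem clamp_snd_fst_mem (z : ℝ × ℝ × ℝ) : (B.clamp z).2.1 ∈ Icc (-B.κ) B.κ :=
  ⟨le_max_left _ _, max_le (by linarith [B.κ_pos]) (min_le_left _ _)⟩

theorem clamp_fst_pos (z : ℝ × ℝ × ℝ) : 0 < (B.clamp z).1 :=
  B.ρ_pos.trans_le (B.clamp_fst_mem z).1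

theorem clamp_eq_self (hr : z.1 ∈ Icc B.ρ B.M) (hu : z.2.1 ∈ Icc (-B.κ) B.κ) :
    B.clamp z = z := by
  simp [clamp, hr.1, hr.2, hu.1, hu.2]

theorem clamp_of_mem_inner (hz : z ∈ B.inner) : B.clamp z = z :=
  B.clamp_eq_self (Ioo_subset_Icc_self hz.1) (Ioo_subset_Icc_self hz.2.1)

theorem isOpen_inner : IsOpen B.inner :=
  isOpen_Ioo.prod (isOpen_Ioo.prod isOpen_univ)

theorem lipschitzWith_clamp : LipschitzWith 1 B.clamp := by
  have hu : LipschitzWith 1 fun z : ℝ × ℝ × ℝ => z.2.1 :=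
    mul_one (1 : ℝ≥0) ▸ LipschitzWith.prod_fst.comp LipschitzWith.prod_snd
  have hψ : LipschitzWith 1 fun z : ℝ × ℝ × ℝ => z.2.2 :=
    mul_one (1 : ℝ≥0) ▸ LipschitzWith.prod_snd.comp LipschitzWith.prod_snd
  unfold clamp
  simpa using ((LipschitzWith.prod_fst.const_min B.M).const_max B.ρ).prodMk
    (((hu.const_min B.κ).const_max (-B.κ)).prodMk hψ)

end ClampBox

/-- The generating system, frozen in `r` and `u` outside the box `B`. -/
noncomputable def clampedField (a μ : ℝ) (B : ClampBox) (z : ℝ × ℝ × ℝ) : ℝ × ℝ × ℝ :=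
  polarField a μ (B.clamp z)

/-- The field is a smooth function of `(r, u, cos ψ, sin ψ)`, which stays in a compact set. -/
theorem exists_lipschitzWith_clampedField (a μ : ℝ) (B : ClampBox) :
    ∃ K L : ℝ≥0, LipschitzWith K (clampedField a μ B) ∧ ∀ z, ‖clampedField a μ B z‖ ≤ L := by
  let f : ℝ × ℝ × ℝ × ℝ → ℝ × ℝ × ℝ := fun w =>
    (-w.2.2.2, w.2.2.1 / w.1, w.2.2.1 * (w.1 / 2 - (2 * a + 1) / w.1) + μ
      + 2 * a / w.1 * (sin (2 * w.2.1) / cos (2 * w.2.1)) * w.2.2.2)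
  let g : ℝ × ℝ × ℝ → ℝ × ℝ × ℝ × ℝ := fun z =>
    ((B.clamp z).1, (B.clamp z).2.1, cos z.2.2, sin z.2.2)
  have hfg : clampedField a μ B = f ∘ g := by
    funext z
    simp [f, g, clampedField, polarField, angleRate, radialCoeff, tan_eq_sin_div_cos,
      ClampBox.clamp]
  have hg : LipschitzWith 1 g := by
    have hψ : LipschitzWith 1 fun z : ℝ × ℝ × ℝ => z.2.2 :=
      mul_one (1 : ℝ≥0) ▸ LipschitzWith.prod_snd.comp LipschitzWith.prod_snd
    simpa using (LipschitzWith.prod_fst.comp B.lipschitzWith_clamp).prodMk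
      ((LipschitzWith.prod_fst.comp (LipschitzWith.prod_snd.comp B.lipschitzWith_clamp)).prodMk
        ((lipschitzWith_cos.comp hψ).prodMk (lipschitzWith_sin.comp hψ)))
  rw [hfg]
  refine exists_lipschitzWith_comp_of_contDiffAt (C := 1)
    (S := Icc B.ρ B.M ×ˢ Icc (-B.κ) B.κ ×ˢ Icc (-1) 1 ×ˢ Icc (-1) 1)
    (isCompact_Icc.prod (isCompact_Icc.prod (isCompact_Icc.prod isCompact_Icc)))
    (fun w hw => ?_) hg fun z => ⟨B.clamp_fst_mem z, B.clamp_snd_fst_mem z,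
      cos_mem_Icc _, sin_mem_Icc _⟩
  have hr : w.1 ≠ 0 := (B.ρ_pos.trans_le hw.1.1).ne'
  have hcos : cos (2 * w.2.1) ≠ 0 :=
    (cos_two_mul_pos ((abs_le.2 hw.2.1).trans_lt B.κ_lt)).ne'
  simp only [f]
  fun_prop (disch := assumption)

/-- A global solution of the truncated system. -/
def IsClampedSolution (a μ : ℝ) (B : ClampBox) (γ : ℝ → ℝ × ℝ × ℝ) : Prop :=
  ∀ t, HasDerivAt γ (clampedField a μ B (γ t)) t

namespace IsClampedSolution

variable {a μ t t₀ : ℝ} {B : ClampBox} {γ γ₁ γ₂ : ℝ → ℝ × ℝ × ℝ}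

theorem hasDerivAt_r (hγ : IsClampedSolution a μ B γ) (t : ℝ) :
    HasDerivAt (fun s => (γ s).1) (-sin (γ t).2.2) t :=
  (hγ t).fst

theorem hasDerivAt_u (hγ : IsClampedSolution a μ B γ) (t : ℝ) :
    HasDerivAt (fun s => (γ s).2.1) (cos (γ t).2.2 / (B.clamp (γ t)).1) t :=
  (hγ t).snd.fst

theorem hasDerivAt_ψ (hγ : IsClampedSolution a μ B γ) (t : ℝ) :
    HasDerivAt (fun s => (γ s).2.2)
      (angleRate a μ (B.clamp (γ t)).1 (B.clamp (γ t)).2.1 (γ t).2.2) t :=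
  (hγ t).snd.snd

theorem continuous (hγ : IsClampedSolution a μ B γ) : Continuous γ :=
  continuous_iff_continuousAt.2 fun t => (hγ t).continuousAt

theorem solvesPolarAt (hγ : IsClampedSolution a μ B γ) (ht : B.clamp (γ t) = γ t) :
    SolvesPolarAt a μ (fun s => (γ s).1) (fun s => (γ s).2.1) (fun s => (γ s).2.2) t where
  r_pos := ht ▸ B.clamp_fst_pos (γ t)
  dr := hγ.hasDerivAt_r t
  du := by simpa only [ht] using hγ.hasDerivAt_u t
  dψ := by simpa only [ht] using hγ.hasDerivAt_ψ t

theorem eq (h₁ : IsClampedSolution a μ B γ₁) (h₂ : IsClampedSolution a μ B γ₂)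
    (h : γ₁ t₀ = γ₂ t₀) : γ₁ = γ₂ := by
  obtain ⟨K, -, hK, -⟩ := exists_lipschitzWith_clampedField a μ B
  exact ODE_solution_unique_univ (v := fun _ => clampedField a μ B) (s := fun _ => univ) (t₀ := t₀)
    (fun _ => hK.lipschitzOnWith) (fun t => ⟨h₁ t, trivial⟩) (fun t => ⟨h₂ t, trivial⟩) h

end IsClampedSolution

theorem exists_clamped_flow (a μ : ℝ) (B : ClampBox) :
    ∃ Φ : ℝ × ℝ × ℝ → ℝ → ℝ × ℝ × ℝ, Continuous ↿Φ ∧ (∀ p, Φ p 0 = p) ∧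
      ∀ p, IsClampedSolution a μ B (Φ p) := by
  obtain ⟨K, L, hK, hL⟩ := exists_lipschitzWith_clampedField a μ B
  exact exists_continuous_flow hK hL

theorem SolvesPolarAt.hasDerivAt_clampedField {a μ t : ℝ} {r u ψ : ℝ → ℝ} {B : ClampBox}
    (h : SolvesPolarAt a μ r u ψ t) (hB : B.clamp (r t, u t, ψ t) = (r t, u t, ψ t)) :
    HasDerivAt (fun s => (r s, u s, ψ s)) (clampedField a μ B (r t, u t, ψ t)) t := by
  rw [clampedField, hB]
  exact h.dr.prodMk (h.du.prodMk h.dψ)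

/-- A return arc that the truncation does not affect is a piece of a global solution of the
truncated system. -/
theorem IsReturnArc.eq_of_isClampedSolution {a μ T : ℝ} {r u ψ : ℝ → ℝ} {B : ClampBox}
    (A : IsReturnArc a μ T r u ψ) (hB : ∀ t ∈ Icc 0 T, (r t, u t, ψ t) ∈ B.inner)
    {γ : ℝ → ℝ × ℝ × ℝ} (hγ : IsClampedSolution a μ B γ) (h₀ : γ 0 = (r 0, 0, 0)) :
    ∀ t ∈ Icc 0 T, γ t = (r t, u t, ψ t) := by
  obtain ⟨K, -, hK, -⟩ := exists_lipschitzWith_clampedField a μ B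
  have hA : ∀ t ∈ Icc 0 T, HasDerivAt (fun s => (r s, u s, ψ s))
      (clampedField a μ B (r t, u t, ψ t)) t := fun t ht =>
    (A.solves t ht).hasDerivAt_clampedField (B.clamp_of_mem_inner (hB t ht))
  exact ODE_solution_unique (v := fun _ => clampedField a μ B) (K := K) (fun _ => hK)
    hγ.continuous.continuousOn (fun t _ => (hγ t).hasDerivWithinAt)
    (HasDerivAt.continuousOn hA) (fun t ht => (hA t (Ico_subset_Icc_self ht)).hasDerivWithinAt)
    (by rw [h₀, A.u_zero, A.ψ_zero])

/-! ### Large radii -/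

theorem tendsto_radialCoeff_atTop (a : ℝ) : Tendsto (radialCoeff a) atTop atTop := by
  have h : Tendsto (fun r : ℝ => -((2 * a + 1) / r)) atTop (𝓝 (-0)) :=
    (tendsto_const_nhds.div_atTop tendsto_id).neg
  exact ((tendsto_id.atTop_div_const two_pos).atTop_add h).congr fun r => by
    simp [radialCoeff, sub_eq_add_neg]

theorem abs_tan_two_mul_le_one {u : ℝ} (hu : |u| ≤ π / 8) : |tan (2 * u)| ≤ 1 := by
  have hmem : ∀ {x}, |x| ≤ π / 4 → x ∈ Ioo (-(π / 2)) (π / 2) := fun h =>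
    abs_lt.1 (h.trans_lt (by linarith [pi_pos]))
  have hquarter : |π / 4| ≤ π / 4 := (abs_of_pos (by positivity)).le
  have h2u : |2 * u| ≤ π / 4 := by rw [abs_mul, abs_two]; linarith
  rw [abs_le, ← tan_pi_div_four, ← tan_neg]
  exact ⟨strictMonoOn_tan.monotoneOn (hmem (abs_neg (π / 4) ▸ hquarter)) (hmem h2u)
      (abs_le.1 h2u).1,
    strictMonoOn_tan.monotoneOn (hmem h2u) (hmem hquarter) (abs_le.1 h2u).2⟩

theorem angleRate_three_pi_div_four_neg {a μ r u : ℝ} (ha : 0 ≤ a) (hμ : 0 < μ) (hr : 1 ≤ r)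
    (hu : |u| ≤ π / 8) (h : 2 * (μ + a) ≤ radialCoeff a r) :
    angleRate a μ r u (π - π / 4) < 0 := by
  have hsqrt : 1 < √2 := by rw [Real.lt_sqrt] <;> norm_num
  have htan : 2 * a / r * tan (2 * u) ≤ 2 * a :=
    (mul_le_of_le_one_right (div_nonneg (by positivity) (zero_le_one.trans hr))
      (abs_le.1 (abs_tan_two_mul_le_one hu)).2).trans (div_le_self (by positivity) hr)
  rw [angleRate, cos_pi_sub, sin_pi_sub, cos_pi_div_four, sin_pi_div_four]
  nlinarith

namespace IsClampedSolution

variable {a μ T r₀ : ℝ} {B : ClampBox} {γ : ℝ → ℝ × ℝ × ℝ}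

theorem abs_r_sub_le (hγ : IsClampedSolution a μ B γ) (t : ℝ) :
    |(γ t).1 - (γ 0).1| ≤ |t| := by
  simpa using convex_univ.norm_image_sub_le_of_norm_hasDerivWithin_le (C := 1)
    (fun s _ => (hγ.hasDerivAt_r s).hasDerivWithinAt)
    (fun s _ => by simpa using abs_sin_le_one (γ s).2.2) (mem_univ 0) (mem_univ t)

theorem isReturnArc (hγ : IsClampedSolution a μ B γ) (h₀ : γ 0 = (r₀, 0, 0)) (hT : 0 < T)
    (hB : ∀ t ∈ Icc 0 T, B.clamp (γ t) = γ t) (huT : (γ T).2.1 = 0)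
    (hu : ∀ t ∈ Ioo 0 T, 0 < (γ t).2.1) (hψ : ∀ t ∈ Ioo 0 T, (γ t).2.2 ∈ Ioo 0 π) :
    IsReturnArc a μ T (fun t => (γ t).1) (fun t => (γ t).2.1) (fun t => (γ t).2.2) where
  T_pos := hT
  solves t ht := hγ.solvesPolarAt (hB t ht)
  u_zero := by simp [h₀]
  ψ_zero := by simp [h₀]
  u_end := huT
  u_pos := hu
  u_lt t ht := by
    rw [← hB t ht]
    exact (B.clamp_snd_fst_mem _).2.trans_lt B.κ_lt
  ψ_mem := hψ

theorem ψ_mem_Ioo (hγ : IsClampedSolution a μ B γ) (ha : 0 ≤ a) (hμ : 0 < μ) (hρ : 1 ≤ B.ρ)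
    (hκ : B.κ ≤ π / 8) (hcoeff : 2 * (μ + a) ≤ radialCoeff a B.ρ) (h₀ : (γ 0).2.2 = 0)
    {t : ℝ} (ht : 0 < t) : (γ t).2.2 ∈ Ioo 0 (π - π / 4) := by
  have hcoeff' : ∀ s, 2 * (μ + a) ≤ radialCoeff a (B.clamp (γ s)).1 := fun s =>
    hcoeff.trans (radialCoeff_le_radialCoeff ha B.ρ_pos (B.clamp_fst_mem _).1)
  have hlow := lt_of_hasDerivAt_pos_of_eq (fun s (_ : s ∈ Icc 0 t) => hγ.hasDerivAt_ψ s) h₀.ge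
    fun s _ hs => by
      rw [hs, angleRate_of_sin_eq_zero sin_zero, cos_zero]
      linarith [hcoeff' s]
  have hupp := lt_of_hasDerivAt_pos_of_eq
    (fun s (_ : s ∈ Icc 0 t) => (hγ.hasDerivAt_ψ s).neg) (c := -(π - π / 4))
    (by simp only [Pi.neg_apply, h₀]; linarith [pi_pos])
    fun s _ hs => by
      rw [show (γ s).2.2 = π - π / 4 from neg_inj.1 hs, neg_pos]
      exact angleRate_three_pi_div_four_neg ha hμ (hρ.trans (B.clamp_fst_mem _).1)
        ((abs_le.2 (B.clamp_snd_fst_mem _)).trans hκ) (hcoeff' s)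
  exact ⟨hlow t (right_mem_Ioc.2 ht), neg_lt_neg_iff.1 (hupp t (right_mem_Ioc.2 ht))⟩

theorem mul_add_mul_u_lt_pi (hγ : IsClampedSolution a μ B γ) (ha : 0 ≤ a)
    (h₀ : γ 0 = (r₀, 0, 0)) (hT : 0 < T) (hr : ∀ t ∈ Icc 0 T, (γ t).1 ∈ Icc B.ρ B.M)
    (hu : ∀ t ∈ Icc 0 T, (γ t).2.1 ∈ Icc 0 B.κ) (hψ : ∀ t ∈ Ioc 0 T, (γ t).2.2 ∈ Ioo 0 π) :
    μ * T + (B.ρ ^ 2 / 2 - (2 * a + 1)) * (γ T).2.1 < π := by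
  have hTmem := right_mem_Icc.2 hT.le
  have hlyap := SolvesPolarAt.lyapunov_le ha hT.le
    (fun t ht => hγ.solvesPolarAt (B.clamp_eq_self (hr t ht)
      (Icc_subset_Icc_left (neg_nonpos.2 B.κ_pos.le) (hu t ht))))
    (fun t ht => Icc_subset_Ico_right B.κ_lt (hu t ht))
    (fun t ht => ?_) (by simp [h₀]) (by simp [h₀])
  · have hsq := mul_le_mul_of_nonneg_right (pow_le_pow_left₀ B.ρ_pos.le (hr T hTmem).1 2)
      (hu T hTmem).1
    linarith [(hψ T (right_mem_Ioc.2 hT)).2]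
  · rcases ht.1.eq_or_lt with rfl | ht₀
    · simp [h₀]
    · exact sin_nonneg_of_mem_Icc (Ioo_subset_Icc_self (hψ t ⟨ht₀, ht.2⟩))

/-- By the Lyapunov inequality, `u` can neither reach `κ` nor stay positive up to time `π / μ`. -/
theorem exists_isReturnArc (hγ : IsClampedSolution a μ B γ) (ha : 0 ≤ a) (hμ : 0 < μ)
    (h₀ : γ 0 = (r₀, 0, 0)) (hr : ∀ t ∈ Icc 0 (π / μ), (γ t).1 ∈ Icc B.ρ B.M)
    (hψ : ∀ t, 0 < t → (γ t).2.2 ∈ Ioo 0 π) (hρ : 0 ≤ B.ρ ^ 2 / 2 - (2 * a + 1))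
    (hκ : π ≤ (B.ρ ^ 2 / 2 - (2 * a + 1)) * B.κ) :
    ∃ T, IsReturnArc a μ T (fun t => (γ t).1) (fun t => (γ t).2.1) (fun t => (γ t).2.2) := by
  have hE : 0 < π / μ := by positivity
  have hκ₀ := B.κ_pos
  have hu₀ : (γ 0).2.1 = 0 := by simp [h₀]
  have hlyap : ∀ t ∈ Ioc 0 (π / μ), (∀ s ∈ Icc 0 t, (γ s).2.1 ∈ Icc 0 B.κ) →
      μ * t + (B.ρ ^ 2 / 2 - (2 * a + 1)) * (γ t).2.1 < π := fun t ht hu =>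
    hγ.mul_add_mul_u_lt_pi ha h₀ ht.1 (fun s hs => hr s ⟨hs.1, hs.2.trans ht.2⟩) hu
      fun s hs => hψ s hs.1
  obtain ⟨b, hb, hexit⟩ : ∃ b ∈ Ioc 0 (π / μ), (γ b).2.1 ∉ Ioo 0 B.κ := by
    by_contra! hstay
    have hu : ∀ s ∈ Icc 0 (π / μ), (γ s).2.1 ∈ Icc 0 B.κ := fun s hs => by
      rcases hs.1.eq_or_lt with rfl | hs₀
      exacts [⟨hu₀.ge, hu₀.trans_le hκ₀.le⟩, Ioo_subset_Icc_self (hstay s ⟨hs₀, hs.2⟩)]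
    have h := hlyap _ (right_mem_Ioc.2 hE) hu
    rw [mul_div_cancel₀ _ hμ.ne'] at h
    linarith [mul_nonneg hρ (hu _ (right_mem_Icc.2 hE.le)).1]
  obtain ⟨T, hT, huT, hmem⟩ := exists_first_exit hκ₀ hb.1
    (HasDerivAt.continuousOn fun t _ => hγ.hasDerivAt_u t) hu₀ (hγ.hasDerivAt_u 0)
    (by simpa [h₀] using B.clamp_fst_pos (γ 0)) hexit
  have hu : ∀ t ∈ Icc 0 T, (γ t).2.1 ∈ Icc 0 B.κ := fun t ht => by
    rcases eq_endpoints_or_mem_Ioo_of_mem_Icc ht with rfl | rfl | ht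
    · exact ⟨hu₀.ge, hu₀.trans_le hκ₀.le⟩
    · rcases huT with h | h <;> rw [h]
      exacts [left_mem_Icc.2 hκ₀.le, right_mem_Icc.2 hκ₀.le]
    · exact Ioo_subset_Icc_self (hmem t ht)
  have hTE : T ≤ π / μ := hT.2.trans hb.2
  refine ⟨T, hγ.isReturnArc h₀ hT.1 (fun t ht => B.clamp_eq_self (hr t ⟨ht.1, ht.2.trans hTE⟩)
    (Icc_subset_Icc_left (neg_nonpos.2 hκ₀.le) (hu t ht))) ?_ (fun t ht => (hmem t ht).1)
    fun t ht => hψ t ht.1⟩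
  refine huT.resolve_right fun h => ?_
  have := h ▸ hlyap T ⟨hT.1, hTE⟩ hu
  linarith [mul_pos hμ hT.1]

end IsClampedSolution

theorem eventually_mem_returnRadii {a μ : ℝ} (ha : 0 ≤ a) (hμ : 0 < μ) :
    ∀ᶠ L in atTop, L ∈ returnRadii a μ := by
  have hhalf : Tendsto (fun L : ℝ => L / 2) atTop atTop := tendsto_id.atTop_div_const two_pos
  have hsq : Tendsto (fun L : ℝ => (L / 2) ^ 2 / 2) atTop atTop :=
    ((tendsto_pow_atTop two_ne_zero).comp hhalf).atTop_div_const two_pos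
  filter_upwards [hhalf.eventually_ge_atTop 1, hhalf.eventually_ge_atTop (π / μ),
    ((tendsto_radialCoeff_atTop a).comp hhalf).eventually_ge_atTop (2 * (μ + a)),
    hsq.eventually_ge_atTop (2 * a + 1 + 8)] with L h1 hE hcoeff h8
  let B : ClampBox := ⟨L / 2, 2 * L, π / 8, by linarith, by linarith, by positivity,
    by linarith [pi_pos]⟩
  obtain ⟨Φ, -, hΦ₀, hΦ⟩ := exists_clamped_flow a μ B
  have h₀ := hΦ₀ (L, 0, 0)
  obtain ⟨T, A⟩ := (hΦ (L, 0, 0)).exists_isReturnArc ha hμ h₀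
    (fun t ht => by
      have h := abs_le.1 ((hΦ (L, 0, 0)).abs_r_sub_le t)
      rw [h₀, abs_of_nonneg ht.1] at h
      constructor <;> simp only [B] <;> linarith [ht.2])
    (fun t ht => Ioo_subset_Ioo_right (by linarith [pi_pos])
      ((hΦ (L, 0, 0)).ψ_mem_Ioo ha hμ h1 le_rfl hcoeff (by simp [h₀]) ht))
    (by simp only [B]; linarith) (by simp only [B]; nlinarith [pi_pos])
  exact ⟨T, _, _, _, A, by simp [h₀]⟩

/-! ### Return arcs form an open and closed family -/

/-- The part of the box in which a return arc with `ψ ≤ π` runs. -/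
def ClampBox.upperRegion (B : ClampBox) : Set (ℝ × ℝ × ℝ) :=
  Icc B.ρ B.M ×ˢ Icc 0 B.κ ×ˢ Icc 0 π

theorem ClampBox.isClosed_upperRegion (B : ClampBox) : IsClosed B.upperRegion :=
  isClosed_Icc.prod (isClosed_Icc.prod isClosed_Icc)

theorem ClampBox.clamp_of_mem_upperRegion (B : ClampBox) {z : ℝ × ℝ × ℝ}
    (hz : z ∈ B.upperRegion) : B.clamp z = z :=
  B.clamp_eq_self hz.1 (Icc_subset_Icc_left (neg_nonpos.2 B.κ_pos.le) hz.2.1)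

namespace IsClampedSolution

variable {a μ T r₀ s : ℝ} {B : ClampBox} {γ : ℝ → ℝ × ℝ × ℝ}

theorem const_of_angleRate_eq_zero (hγ : IsClampedSolution a μ B γ) (hsin : sin (γ s).2.2 = 0)
    (hrate : angleRate a μ (B.clamp (γ s)).1 (B.clamp (γ s)).2.1 (γ s).2.2 = 0) (t : ℝ) :
    (γ t).1 = (γ s).1 ∧ (γ t).2.2 = (γ s).2.2 := by
  let σ : ℝ → ℝ × ℝ × ℝ := fun t =>
    ((γ s).1, (γ s).2.1 + (t - s) * (cos (γ s).2.2 / (B.clamp (γ s)).1), (γ s).2.2)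
  have hσ : IsClampedSolution a μ B σ := fun t => by
    refine ((hasDerivAt_const t (γ s).1).prodMk (((((hasDerivAt_id t).sub_const s).mul_const
      (cos (γ s).2.2 / (B.clamp (γ s)).1)).const_add (γ s).2.1).prodMk
      (hasDerivAt_const t (γ s).2.2))).congr_deriv ?_
    rw [angleRate_of_sin_eq_zero hsin] at hrate
    simp only [σ, clampedField, polarField, ClampBox.clamp, angleRate_of_sin_eq_zero hsin,
      hsin, neg_zero, one_mul]
    rw [← hrate]
    rfl
  have hγσ : γ = σ := hγ.eq hσ (t₀ := s) (by simp [σ])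
  rw [hγσ]
  exact ⟨by simp [σ], by simp [σ]⟩

theorem ψ_mem_Ioo_of_mapsTo (hγ : IsClampedSolution a μ B γ) (h₀ : γ 0 = (r₀, 0, 0))
    (hcoeff : 0 < radialCoeff a r₀ + μ) (hmaps : MapsTo γ (Icc 0 T) B.upperRegion)
    (hs : s ∈ Ioo 0 T) : (γ s).2.2 ∈ Ioo 0 π := by
  have hψ : ∀ t ∈ Icc 0 T, (γ t).2.2 ∈ Icc 0 π := fun t ht => (hmaps ht).2.2
  have hnear := Icc_mem_nhds hs.1 hs.2
  by_contra hend
  have hend' : (γ s).2.2 = 0 ∨ (γ s).2.2 = π := by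
    rcases eq_endpoints_or_mem_Ioo_of_mem_Icc (hψ s (Ioo_subset_Icc_self hs)) with h | h | h
    exacts [.inl h, .inr h, (hend h).elim]
  have hextr : IsLocalExtr (fun t => (γ t).2.2) s := hend'.imp
    (fun h => mem_of_superset hnear fun t ht => h.trans_le (hψ t ht).1)
    (fun h => mem_of_superset hnear fun t ht => (hψ t ht).2.trans_eq h.symm)
  have hrate := hextr.hasDerivAt_eq_zero (hγ.hasDerivAt_ψ s)
  have hsin : sin (γ s).2.2 = 0 := by rcases hend' with h | h <;> simp [h]
  obtain ⟨hr, hψs⟩ := hγ.const_of_angleRate_eq_zero hsin hrate 0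
  rw [h₀] at hr hψs
  rw [B.clamp_of_mem_upperRegion (hmaps (Ioo_subset_Icc_self hs)), angleRate_of_sin_eq_zero hsin,
    ← hr, ← hψs, cos_zero, one_mul] at hrate
  exact hcoeff.ne' hrate

/-- If `u` vanished before time `T`, then `ψ` would be at least `π / 2` there, and afterwards `u`
would become negative. -/
theorem isReturnArc_of_mapsTo (hγ : IsClampedSolution a μ B γ) (ha : 0 ≤ a) (hμ : 0 < μ)
    (h₀ : γ 0 = (r₀, 0, 0)) (hcoeff : 0 < radialCoeff a r₀ + μ) (hT : 0 < T)
    (hmaps : MapsTo γ (Icc 0 T) B.upperRegion) (huT : (γ T).2.1 = 0) :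
    IsReturnArc a μ T (fun t => (γ t).1) (fun t => (γ t).2.1) (fun t => (γ t).2.2) := by
  have hclamp : ∀ t ∈ Icc 0 T, B.clamp (γ t) = γ t := fun t ht =>
    B.clamp_of_mem_upperRegion (hmaps ht)
  refine hγ.isReturnArc h₀ hT hclamp huT (fun s hs => ?_)
    fun s hs => hγ.ψ_mem_Ioo_of_mapsTo h₀ hcoeff hmaps hs
  refine (hmaps (Ioo_subset_Icc_self hs)).2.1.1.lt_of_ne' fun hus => ?_
  have hsub : ∀ {t}, t ∈ Icc s T → t ∈ Icc 0 T := fun ht => Icc_subset_Icc_left hs.1.le ht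
  have hmin : IsLocalMin (fun t => (γ t).2.1) s := mem_of_superset (Icc_mem_nhds hs.1 hs.2)
    fun t ht => hus.trans_le (hmaps ht).2.1.1
  have hcos : cos (γ s).2.2 = 0 := by
    simpa [(B.clamp_fst_pos (γ s)).ne'] using hmin.hasDerivAt_eq_zero (hγ.hasDerivAt_u s)
  have hψs : (γ s).2.2 = π / 2 := injOn_cos (hmaps (Ioo_subset_Icc_self hs)).2.2
    ⟨by positivity, by linarith [pi_pos]⟩ (hcos.trans cos_pi_div_two.symm)
  have hψ := lt_of_hasDerivAt_pos_of_eq (fun t (_ : t ∈ Icc s T) => hγ.hasDerivAt_ψ t) hψs.ge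
    fun t ht h => by
      rw [h, hclamp t (hsub ht)]
      exact angleRate_pi_div_two_pos ha hμ (B.ρ_pos.trans_le (hmaps (hsub ht)).1.1)
        (Icc_subset_Ico_right B.κ_lt (hmaps (hsub ht)).2.1)
  have hu := lt_of_hasDerivAt_pos hs.2 (fun t _ => (hγ.hasDerivAt_u t).neg) fun t ht =>
    neg_pos.2 <| div_neg_of_neg_of_pos
      (cos_neg_of_pi_div_two_lt_of_lt (hψ t (Ioo_subset_Ioc_self ht))
        (by linarith [(hmaps (hsub (Ioo_subset_Icc_self ht))).2.2.2, pi_pos]))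
      (B.clamp_fst_pos _)
  simp only [Pi.neg_apply, hus, huT, lt_irrefl] at hu

theorem exists_past_return (hγ : IsClampedSolution a μ B γ) (ha : 0 ≤ a) (hμ : 0 < μ)
    (A : IsReturnArc a μ T (fun t => (γ t).1) (fun t => (γ t).2.1) (fun t => (γ t).2.2))
    (hB : ∀ t ∈ Icc 0 T, γ t ∈ B.inner) (hψT : (γ T).2.2 < π) :
    ∃ b, 0 < b ∧ (∀ t ∈ Icc 0 b, γ t ∈ B.inner ∧ (γ t).2.2 < π) ∧
      (∀ t ∈ Ioc 0 b, 0 < (γ t).2.2) ∧ (γ b).2.1 < 0 := by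
  obtain ⟨m, hm⟩ := A.exists_isTurningTime ha hμ
  have hT := right_mem_Icc.2 A.T_pos.le
  have hψT' : π / 2 < (γ T).2.2 := hm.gt T ⟨hm.mem.2, le_rfl⟩
  have hu := eventually_gt_right_of_hasDerivAt_pos (hγ.hasDerivAt_u T).neg <| neg_pos.2 <|
    div_neg_of_neg_of_pos (cos_neg_of_pi_div_two_lt_of_lt hψT' (by linarith [pi_pos]))
      (B.clamp_fst_pos _)
  have hopen : IsOpen (B.inner ∩ (fun z => z.2.2) ⁻¹' Ioo 0 π) :=
    B.isOpen_inner.inter (isOpen_Ioo.preimage (continuous_snd.comp continuous_snd))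
  have hnear := (hγ.continuous.tendsto T).eventually
    (hopen.eventually_mem ⟨hB T hT, pi_div_two_pos.trans hψT', hψT⟩)
  obtain ⟨b, hb, hgood⟩ := mem_nhdsGT_iff_exists_Ioc_subset.1
    (hu.and (nhdsWithin_le_nhds hnear))
  have hTb : T < b := hb
  refine ⟨b, A.T_pos.trans hTb, fun t ht => ?_, fun t ht => ?_, ?_⟩
  · rcases le_or_gt t T with h | h
    · refine ⟨hB t ⟨ht.1, h⟩, ?_⟩
      rcases eq_endpoints_or_mem_Ioo_of_mem_Icc ⟨ht.1, h⟩ with rfl | rfl | h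
      exacts [A.ψ_zero.trans_lt pi_pos, hψT, (A.ψ_mem t h).2]
    · exact ⟨(hgood ⟨h, ht.2⟩).2.1, (hgood ⟨h, ht.2⟩).2.2.2⟩
  · rcases lt_trichotomy t T with h | rfl | h
    exacts [(A.ψ_mem t ⟨ht.1, h⟩).1, pi_div_two_pos.trans hψT', (hgood ⟨h, ht.2⟩).2.2.1]
  · have h : -(γ T).2.1 < -(γ b).2.1 := (hgood ⟨hTb, le_rfl⟩).1
    rwa [A.u_end, neg_lt_neg_iff] at h

end IsClampedSolution

theorem eventually_mem_returnRadii_of_flow {a μ T r₀ : ℝ} {B : ClampBox}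
    {Φ : ℝ × ℝ × ℝ → ℝ → ℝ × ℝ × ℝ} (ha : 0 ≤ a) (hμ : 0 < μ) (hΦc : Continuous ↿Φ)
    (hΦ₀ : ∀ p, Φ p 0 = p) (hΦ : ∀ p, IsClampedSolution a μ B (Φ p))
    (hcoeff : 0 < radialCoeff a r₀ + μ)
    (A : IsReturnArc a μ T (fun t => (Φ (r₀, 0, 0) t).1) (fun t => (Φ (r₀, 0, 0) t).2.1)
      (fun t => (Φ (r₀, 0, 0) t).2.2))
    (hB : ∀ t ∈ Icc 0 T, Φ (r₀, 0, 0) t ∈ B.inner) (hψT : (Φ (r₀, 0, 0) T).2.2 < π) :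
    ∀ᶠ x in 𝓝 r₀, x ∈ returnRadii a μ := by
  obtain ⟨b, hb, hin, hψ, hu⟩ := (hΦ _).exists_past_return ha hμ A hB hψT
  obtain ⟨K, -, hK, -⟩ := exists_lipschitzWith_clampedField a μ B
  have hcont : Continuous fun z : ℝ × ℝ => Φ (z.1, 0, 0) z.2 :=
    hΦc.comp (f := fun z : ℝ × ℝ => ((z.1, (0 : ℝ), (0 : ℝ)), z.2)) (by fun_prop)
  have hψ_ev : ∀ᶠ x in 𝓝 r₀, ∀ t ∈ Ioc 0 b, 0 < (Φ (x, 0, 0) t).2.2 := by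
    refine eventually_forall_pos_Ioc (F := fun x t => (Φ (x, 0, 0) t).2.2)
      (F' := fun x t => (clampedField a μ B (Φ (x, 0, 0) t)).2.2)
      (continuous_snd.snd.comp hcont) (continuous_snd.snd.comp (hK.continuous.comp hcont))
      (fun x t => (hΦ _).hasDerivAt_ψ t) (fun x => by simp [hΦ₀]) ?_ hψ
    have h₀ := B.clamp_of_mem_inner (hin 0 (left_mem_Icc.2 hb.le)).1
    simp only [clampedField, polarField, h₀]
    simpa [hΦ₀, angleRate] using hcoeff
  have hin_ev : ∀ᶠ x in 𝓝 r₀, ∀ t ∈ Icc 0 b, Φ (x, 0, 0) t ∈ B.inner ∧ (Φ (x, 0, 0) t).2.2 < π :=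
    isCompact_Icc.eventually_forall_of_forall_eventually fun t ht =>
      (hcont.tendsto (r₀, t)).eventually
        ((B.isOpen_inner.inter (isOpen_Iio.preimage
          (continuous_snd.comp continuous_snd))).eventually_mem (hin t ht))
  have hu_ev : ∀ᶠ x in 𝓝 r₀, (Φ (x, 0, 0) b).2.1 < 0 :=
    ((continuous_snd.fst.comp (hcont.comp (Continuous.prodMk_left b))).tendsto r₀).eventually
      (gt_mem_nhds hu)
  filter_upwards [hψ_ev, hin_ev, hu_ev] with x hψx hinx hux
  have h₀ := hΦ₀ (x, 0, 0)
  obtain ⟨T', hT', huT', hpos⟩ := exists_first_return hb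
    (HasDerivAt.continuousOn fun t _ => (hΦ (x, 0, 0)).hasDerivAt_u t) (by simp [h₀])
    ((hΦ (x, 0, 0)).hasDerivAt_u 0)
    (by have := B.clamp_fst_pos (x, 0, 0); simp only [h₀, cos_zero]; positivity) hux.le
  have hA := (hΦ (x, 0, 0)).isReturnArc h₀ hT'.1
    (fun t ht => B.clamp_of_mem_inner (hinx t ⟨ht.1, ht.2.trans hT'.2⟩).1) huT' hpos
    fun t ht => ⟨hψx t ⟨ht.1, ht.2.le.trans hT'.2⟩, (hinx t ⟨ht.1.le, ht.2.le.trans hT'.2⟩).2⟩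
  exact ⟨T', _, _, _, hA, by simp [h₀]⟩

theorem isCompact_inter_setOf_mapsTo_Icc {X Y : Type*} [TopologicalSpace X] [TopologicalSpace Y]
    {φ : X → ℝ → Y} {K : Set (X × ℝ)} {S : Set Y} (hφ : Continuous ↿φ) (hK : IsCompact K)
    (hK₀ : ∀ z ∈ K, 0 ≤ z.2) (hS : IsClosed S) :
    IsCompact (K ∩ {z | MapsTo (φ z.1) (Icc 0 z.2) S}) := by
  have hclosed : IsClosed (⋂ s ∈ Icc (0 : ℝ) 1, {z : X × ℝ | φ z.1 (s * z.2) ∈ S}) :=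
    isClosed_biInter fun s _ => hS.preimage
      (hφ.comp (f := fun z : X × ℝ => (z.1, s * z.2)) (by fun_prop))
  convert hK.inter_right hclosed using 1
  ext z
  simp only [mem_inter_iff, mem_iInter, and_congr_right_iff]
  intro hz
  constructor
  · exact fun h s hs => h ⟨mul_nonneg hs.1 (hK₀ z hz), mul_le_of_le_one_left (hK₀ z hz) hs.2⟩
  · intro h t ht
    rcases (hK₀ z hz).eq_or_lt with h₀ | h₀
    · have ht₀ : t = 0 := (ht.2.trans h₀.ge).antisymm ht.1
      simpa [ht₀] using h 0 (left_mem_Icc.2 zero_le_one)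
    · simpa [div_mul_cancel₀ t h₀.ne'] using
        h (t / z.2) ⟨div_nonneg ht.1 h₀.le, div_le_one_of_le₀ ht.2 h₀.le⟩

theorem IsReturnArc.isReturnArc_of_isClampedSolution {a μ T : ℝ} {r u ψ : ℝ → ℝ} {B : ClampBox}
    (A : IsReturnArc a μ T r u ψ) (hB : ∀ t ∈ Icc 0 T, (r t, u t, ψ t) ∈ B.inner)
    {γ : ℝ → ℝ × ℝ × ℝ} (hγ : IsClampedSolution a μ B γ) (h₀ : γ 0 = (r 0, 0, 0)) :
    IsReturnArc a μ T (fun t => (γ t).1) (fun t => (γ t).2.1) (fun t => (γ t).2.2) ∧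
      ∀ t ∈ Icc 0 T, γ t ∈ B.inner := by
  have heq := A.eq_of_isClampedSolution hB hγ h₀
  have hin : ∀ t ∈ Icc 0 T, γ t ∈ B.inner := fun t ht => heq t ht ▸ hB t ht
  refine ⟨hγ.isReturnArc h₀ A.T_pos (fun t ht => B.clamp_of_mem_inner (hin t ht)) ?_
    (fun t ht => ?_) (fun t ht => ?_), hin⟩
  · rw [heq T (right_mem_Icc.2 A.T_pos.le), A.u_end]
  · rw [heq t (Ioo_subset_Icc_self ht)]
    exact A.u_pos t ht
  · rw [heq t (Ioo_subset_Icc_self ht)]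
    exact A.ψ_mem t ht

theorem isCompact_returnRadii_inter_Icc {a μ ρ L : ℝ} (ha : 0 < a) (hμ : 0 < μ) (hρ : 0 < ρ)
    (hρL : ρ ≤ L) (hcoeff : 0 < radialCoeff a ρ + μ) :
    IsCompact (returnRadii a μ ∩ Icc ρ L) := by
  obtain ⟨t₀, ht₀, B, hB⟩ := exists_clampBox ha hμ hρ (hρ.trans_le hρL)
  obtain ⟨Φ, hΦc, hΦ₀, hΦ⟩ := exists_clamped_flow a μ B
  have hcont : Continuous ↿(fun x : ℝ => Φ (x, 0, 0)) :=
    hΦc.comp (f := fun z : ℝ × ℝ => ((z.1, (0 : ℝ), (0 : ℝ)), z.2)) (by fun_prop)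
  have hcompact := ((isCompact_inter_setOf_mapsTo_Icc hcont
    ((isCompact_Icc (a := ρ) (b := L)).prod (isCompact_Icc (a := t₀) (b := π / μ)))
    (fun z hz => ht₀.le.trans hz.2.1) B.isClosed_upperRegion).inter_right
    (isClosed_eq (continuous_snd.fst.comp hcont) (continuous_const (y := 0)))).image continuous_fst
  convert hcompact using 1
  ext x
  constructor
  · rintro ⟨⟨T, r, u, ψ, A, rfl⟩, hx⟩
    obtain ⟨hT, hin⟩ := hB A hx
    have heq := A.eq_of_isClampedSolution hin (hΦ _) (hΦ₀ _)
    refine ⟨(r 0, T), ⟨⟨⟨hx, hT, A.T_le ha.le hμ⟩, fun t ht => ?_⟩, ?_⟩, rfl⟩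
    · obtain ⟨hr, hu, -⟩ := hin t ht
      rw [heq t ht]
      exact ⟨Ioo_subset_Icc_self hr, ⟨(A.u_mem ht).1, hu.2.le⟩, A.ψ_mem_Icc ht⟩
    · exact (congrArg (fun z => z.2.1) (heq T (right_mem_Icc.2 A.T_pos.le))).trans A.u_end
  · rintro ⟨⟨x, T⟩, ⟨⟨⟨hx, hT⟩, hmaps⟩, huT⟩, rfl⟩
    have hcoeff' : 0 < radialCoeff a x + μ :=
      hcoeff.trans_le (add_le_add_left (radialCoeff_le_radialCoeff ha.le hρ hx.1) μ)
    have A := (hΦ (x, 0, 0)).isReturnArc_of_mapsTo ha.le hμ (hΦ₀ _) hcoeff'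
      (ht₀.trans_le hT.1) hmaps huT
    exact ⟨⟨T, _, _, _, A, by simp [hΦ₀]⟩, hx⟩

/-- Return arcs with `ψ < π` at the end persist under small changes of the radius, so the arc with
the smallest radius has `ψ = π` there. -/
theorem exists_closing_arc {a μ : ℝ} (ha : 0 < a) (hμ : 0 < μ) :
    ∃ B T γ, IsClampedSolution a μ B γ ∧
      IsReturnArc a μ T (fun t => (γ t).1) (fun t => (γ t).2.1) (fun t => (γ t).2.2) ∧
      (∀ t ∈ Icc 0 T, γ t ∈ B.inner) ∧ (γ T).2.2 = π := by
  obtain ⟨ρ, hρ, hcoeffρ, hρ_notMem⟩ := exists_notMem_returnRadii ha.le hμ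
  obtain ⟨L, hL, hρL⟩ := ((eventually_mem_returnRadii ha.le hμ).and (eventually_ge_atTop ρ)).exists
  obtain ⟨r₀, ⟨hmem, hr₀⟩, hleast⟩ := (isCompact_returnRadii_inter_Icc ha hμ hρ hρL
    hcoeffρ).exists_isLeast ⟨L, hL, right_mem_Icc.2 hρL⟩
  obtain ⟨T, r, u, ψ, A, rfl⟩ := hmem
  obtain ⟨_, -, B, hB⟩ := exists_clampBox ha hμ (hρ.trans_le hr₀.1) (hρ.trans_le hr₀.1)
  have hin := (hB A ⟨le_rfl, le_rfl⟩).2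
  obtain ⟨Φ, hΦc, hΦ₀, hΦ⟩ := exists_clamped_flow a μ B
  obtain ⟨A', hin'⟩ := A.isReturnArc_of_isClampedSolution hin (hΦ _) (hΦ₀ _)
  refine ⟨B, T, Φ (r 0, 0, 0), hΦ _, A', hin', ?_⟩
  by_contra hψT
  have hcoeff : 0 < radialCoeff a (r 0) + μ :=
    hcoeffρ.trans_le (add_le_add_left (radialCoeff_le_radialCoeff ha.le hρ hr₀.1) μ)
  have hopen := eventually_mem_returnRadii_of_flow ha.le hμ hΦc hΦ₀ hΦ hcoeff A' hin'
    ((A'.ψ_mem_Icc (right_mem_Icc.2 A.T_pos.le)).2.lt_of_ne hψT)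
  have hρr₀ : ρ < r 0 := hr₀.1.lt_of_ne fun h => hρ_notMem ⟨T, r, u, ψ, A, h.symm⟩
  obtain ⟨x, hx, hx'⟩ :=
    ((hopen.filter_mono nhdsWithin_le_nhds).and (Ioo_mem_nhdsLT hρr₀)).exists
  exact hx'.2.not_ge (hleast ⟨hx, hx'.1.le, hx'.2.le.trans hr₀.2⟩)

/-! ### Closing the arc by reflection -/

theorem angleRate_neg_neg (a μ r u ψ : ℝ) :
    angleRate a μ r (-u) (-ψ) = angleRate a μ r u ψ := by
  simp [angleRate]

theorem angleRate_add_int_mul_two_pi (a μ r u ψ : ℝ) (j : ℤ) :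
    angleRate a μ r u (ψ + j * (2 * π)) = angleRate a μ r u ψ := by
  simp [angleRate]

/-- A solution of the generating system whose trace is a loop, obtained from an arc on `[0, T]` on
one side of the diagonal by reflection across the diagonal. -/
structure IsSymmetricLoop (a μ T : ℝ) (r u ψ : ℝ → ℝ) : Prop where
  T_pos : 0 < T
  solves : ∀ t, SolvesPolarAt a μ r u ψ t
  abs_u_lt : ∀ t, |u t| < π / 4
  u_pos : ∀ t ∈ Ioo 0 T, 0 < u t
  strictAntiOn_r : StrictAntiOn r (Icc 0 T)
  r_neg : ∀ t, r (-t) = r t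
  u_neg : ∀ t, u (-t) = -u t
  ψ_neg : ∀ t, ψ (-t) = -ψ t
  r_reflect : ∀ t, r (2 * T - t) = r t
  u_reflect : ∀ t, u (2 * T - t) = -u t
  ψ_reflect : ∀ t, ψ (2 * T - t) = 2 * π - ψ t

theorem ClampBox.clamp_reflect (B : ClampBox) (r u ψ ψ' : ℝ) :
    B.clamp (r, -u, ψ') = ((B.clamp (r, u, ψ)).1, -(B.clamp (r, u, ψ)).2.1, ψ') := by
  have : max (-B.κ) (min B.κ (-u)) = -max (-B.κ) (min B.κ u) := by
    rw [← min_neg_neg, neg_neg, max_min_distrib_left, ← max_neg_neg]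
    grind [B.κ_pos]
  simp [clamp, this]

namespace IsClampedSolution

variable {a μ t₀ : ℝ} {B : ClampBox} {γ : ℝ → ℝ × ℝ × ℝ}

theorem reflect (hγ : IsClampedSolution a μ B γ) (t₀ : ℝ) (j : ℤ) :
    IsClampedSolution a μ B fun t =>
      ((γ (2 * t₀ - t)).1, -(γ (2 * t₀ - t)).2.1, j * (2 * π) - (γ (2 * t₀ - t)).2.2) := by
  intro t
  have hd := (hasDerivAt_id t).const_sub (2 * t₀)
  refine (((hγ.hasDerivAt_r _).comp t hd).prodMk (((hγ.hasDerivAt_u _).comp t hd).neg.prodMk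
    (((hγ.hasDerivAt_ψ _).comp t hd).const_sub _))).congr_deriv ?_
  rw [clampedField, B.clamp_reflect _ _ (γ (2 * t₀ - t)).2.2]
  simp only [polarField, id, sub_eq_neg_add, angleRate_add_int_mul_two_pi, angleRate_neg_neg]
  simp

theorem eq_reflect (hγ : IsClampedSolution a μ B γ) {j : ℤ} (hu : (γ t₀).2.1 = 0)
    (hψ : (γ t₀).2.2 = j * π) (t : ℝ) :
    γ (2 * t₀ - t) = ((γ t).1, -(γ t).2.1, j * (2 * π) - (γ t).2.2) := by
  have h := congrFun ((hγ.reflect t₀ j).eq hγ (t₀ := t₀) ?_) (2 * t₀ - t)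
  · simpa using h.symm
  · rw [show 2 * t₀ - t₀ = t₀ by ring]
    refine Prod.ext rfl (Prod.ext (by simp [hu]) ?_)
    simp only [hψ]
    ring

theorem isSymmetricLoop {T : ℝ} (hγ : IsClampedSolution a μ B γ)
    (A : IsReturnArc a μ T (fun t => (γ t).1) (fun t => (γ t).2.1) (fun t => (γ t).2.2))
    (hB : ∀ t ∈ Icc 0 T, γ t ∈ B.inner) (hψT : (γ T).2.2 = π) :
    IsSymmetricLoop a μ T (fun t => (γ t).1) (fun t => (γ t).2.1) (fun t => (γ t).2.2) := by
  have h₀ : ∀ t, γ (-t) = ((γ t).1, -(γ t).2.1, -(γ t).2.2) := by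
    simpa using hγ.eq_reflect (j := 0) A.u_zero (by simpa using A.ψ_zero)
  have hT : ∀ t, γ (2 * T - t) = ((γ t).1, -(γ t).2.1, 2 * π - (γ t).2.2) := by
    simpa using hγ.eq_reflect (j := 1) A.u_end (by simpa using hψT)
  have hperiodic : Function.Periodic (fun t => ((γ t).1, (γ t).2.1)) (2 * T) := fun t => by
    simp only [show t + 2 * T = 2 * T - -t by ring, hT, h₀, neg_neg]
  have hbox : ∀ t, (γ t).1 ∈ Ioo B.ρ B.M ∧ (γ t).2.1 ∈ Ioo (-B.κ) B.κ := by
    intro t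
    obtain ⟨s, hs, hst⟩ := hperiodic.exists_mem_Ico₀ (by linarith [A.T_pos]) t
    rw [(Prod.mk.inj hst).1, (Prod.mk.inj hst).2]
    rcases le_total s T with h | h
    · exact ⟨(hB s ⟨hs.1, h⟩).1, (hB s ⟨hs.1, h⟩).2.1⟩
    · have hreflect := hB (2 * T - s) ⟨by linarith [hs.2], by linarith⟩
      rw [hT] at hreflect
      exact ⟨hreflect.1, neg_lt.1 hreflect.2.1.2, neg_lt_neg_iff.1 hreflect.2.1.1⟩
  refine ⟨A.T_pos, fun t => hγ.solvesPolarAt (B.clamp_eq_self (Ioo_subset_Icc_self (hbox t).1)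
    (Ioo_subset_Icc_self (hbox t).2)), fun t => (abs_lt.2 (hbox t).2).trans B.κ_lt, A.u_pos,
    A.strictAntiOn_r, ?_, ?_, ?_, ?_, ?_, ?_⟩ <;> intro t <;> simp only [h₀, hT]

end IsClampedSolution

theorem exists_isSymmetricLoop {a μ : ℝ} (ha : 0 < a) (hμ : 0 < μ) :
    ∃ T r u ψ, IsSymmetricLoop a μ T r u ψ := by
  obtain ⟨B, T, γ, hγ, A, hB, hψT⟩ := exists_closing_arc ha hμ
  exact ⟨T, _, _, _, hγ.isSymmetricLoop A hB hψT⟩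

/-! ### Cartesian coordinates -/

theorem tan_two_mul_eq_of_pi_div_four_sub {u α : ℝ} (hα : α = π / 4 - u) :
    tan (2 * u) = (cos α ^ 2 - sin α ^ 2) / (2 * sin α * cos α) := by
  rw [← cos_two_mul', ← sin_two_mul, hα, show 2 * (π / 4 - u) = π / 2 - 2 * u by ring,
    cos_pi_div_two_sub, sin_pi_div_two_sub, tan_eq_sin_div_cos]

theorem cos_pi_div_four_sub_pos {u : ℝ} (hu : |u| < π / 4) : 0 < cos (π / 4 - u) := by
  rw [abs_lt] at hu
  exact cos_pos_of_mem_Ioo ⟨by linarith [pi_pos], by linarith⟩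

theorem sin_pi_div_four_sub_pos {u : ℝ} (hu : |u| < π / 4) : 0 < sin (π / 4 - u) := by
  rw [abs_lt] at hu
  exact sin_pos_of_pos_of_lt_pi (by linarith) (by linarith [pi_pos])

theorem eq_of_polar_eq {r₁ r₂ α₁ α₂ : ℝ} (hr₁ : 0 < r₁) (hr₂ : 0 < r₂) (hα₁ : α₁ ∈ Icc 0 π)
    (hα₂ : α₂ ∈ Icc 0 π) (hcos : r₁ * cos α₁ = r₂ * cos α₂) (hsin : r₁ * sin α₁ = r₂ * sin α₂) :
    r₁ = r₂ ∧ α₁ = α₂ := by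
  have hr : r₁ = r₂ := by
    refine (pow_left_inj₀ hr₁.le hr₂.le two_ne_zero).1 ?_
    linear_combination (r₁ * cos α₁ + r₂ * cos α₂) * hcos + (r₁ * sin α₁ + r₂ * sin α₂) * hsin
      - r₁ ^ 2 * cos_sq_add_sin_sq α₁ + r₂ ^ 2 * cos_sq_add_sin_sq α₂
  subst hr
  exact ⟨rfl, injOn_cos hα₁ hα₂ (mul_left_cancel₀ hr₁.ne' hcos)⟩

namespace SolvesPolarAt

variable {a μ t : ℝ} {r u ψ : ℝ → ℝ}

theorem hasDerivAt_x (h : SolvesPolarAt a μ r u ψ t) :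
    HasDerivAt (fun s => r s * cos (π / 4 - u s)) (cos (-(π / 4) - u t - ψ t)) t := by
  refine (h.dr.mul (h.du.const_sub (π / 4)).cos).congr_deriv ?_
  rw [show -(π / 4) - u t - ψ t = π / 4 - u t - ψ t - π / 2 by ring, cos_sub_pi_div_two,
    sin_sub (π / 4 - u t)]
  have := h.r_pos.ne'
  field_simp
  ring

theorem hasDerivAt_y (h : SolvesPolarAt a μ r u ψ t) :
    HasDerivAt (fun s => r s * sin (π / 4 - u s)) (sin (-(π / 4) - u t - ψ t)) t := by
  refine (h.dr.mul (h.du.const_sub (π / 4)).sin).congr_deriv ?_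
  rw [show -(π / 4) - u t - ψ t = π / 4 - u t - ψ t - π / 2 by ring, sin_sub_pi_div_two,
    cos_sub (π / 4 - u t)]
  have := h.r_pos.ne'
  field_simp
  ring

theorem hasDerivAt_θ (h : SolvesPolarAt a μ r u ψ t) (hu : |u t| < π / 4) :
    HasDerivAt (fun s => -(π / 4) - u s - ψ s)
      ((r t * cos (π / 4 - u t) / 2 - a / (r t * cos (π / 4 - u t))) *
          sin (-(π / 4) - u t - ψ t) +
        (a / (r t * sin (π / 4 - u t)) - r t * sin (π / 4 - u t) / 2) *
          cos (-(π / 4) - u t - ψ t) - μ) t := by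
  refine ((h.du.const_sub (-(π / 4))).sub h.dψ).congr_deriv ?_
  have hr := h.r_pos.ne'
  have hcos := (cos_pi_div_four_sub_pos hu).ne'
  have hsin := (sin_pi_div_four_sub_pos hu).ne'
  have hsq := cos_sq_add_sin_sq (π / 4 - u t)
  rw [show -(π / 4) - u t - ψ t = π / 4 - u t - ψ t - π / 2 by ring, cos_sub_pi_div_two,
    sin_sub_pi_div_two, cos_sub (π / 4 - u t), sin_sub (π / 4 - u t), angleRate, radialCoeff,
    tan_two_mul_eq_of_pi_div_four_sub rfl]
  generalize cos (π / 4 - u t) = C at *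
  generalize sin (π / 4 - u t) = S at *
  rw [← sub_eq_zero]
  trans r t * cos (ψ t) / 2 * (C ^ 2 + S ^ 2 - 1)
  · field_simp
    ring
  · rw [hsq, sub_self, mul_zero]

end SolvesPolarAt

namespace IsSymmetricLoop

variable {a μ T : ℝ} {r u ψ : ℝ → ℝ}

theorem r_add_period (C : IsSymmetricLoop a μ T r u ψ) (t : ℝ) : r (t + 2 * T) = r t := by
  rw [show t + 2 * T = 2 * T - -t by ring, C.r_reflect, C.r_neg]

theorem u_add_period (C : IsSymmetricLoop a μ T r u ψ) (t : ℝ) : u (t + 2 * T) = u t := by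
  rw [show t + 2 * T = 2 * T - -t by ring, C.u_reflect, C.u_neg, neg_neg]

theorem ψ_add_period (C : IsSymmetricLoop a μ T r u ψ) (t : ℝ) :
    ψ (t + 2 * T) = ψ t + 2 * π := by
  rw [show t + 2 * T = 2 * T - -t by ring, C.ψ_reflect, C.ψ_neg, sub_neg_eq_add, add_comm]

theorem u_neg_of_mem (C : IsSymmetricLoop a μ T r u ψ) {t : ℝ} (ht : t ∈ Ioo T (2 * T)) :
    u t < 0 := by
  rw [← neg_pos, ← C.u_reflect]
  exact C.u_pos _ ⟨by linarith [ht.2], by linarith [ht.1]⟩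

theorem u_nonneg (C : IsSymmetricLoop a μ T r u ψ) {t : ℝ} (ht : t ∈ Icc 0 T) : 0 ≤ u t := by
  rcases eq_endpoints_or_mem_Ioo_of_mem_Icc ht with rfl | rfl | h
  · have := C.u_neg 0
    rw [neg_zero] at this
    linarith
  · have := C.u_reflect t
    rw [show 2 * t - t = t by ring] at this
    linarith
  · exact (C.u_pos t h).le

theorem injOn (C : IsSymmetricLoop a μ T r u ψ) :
    InjOn (fun t => (r t, u t)) (Ico 0 (2 * T)) := by
  intro t₁ ht₁ t₂ ht₂ h
  obtain ⟨hr, hu⟩ := Prod.mk.inj h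
  rcases le_or_gt t₁ T with h₁ | h₁ <;> rcases le_or_gt t₂ T with h₂ | h₂
  · exact C.strictAntiOn_r.injOn ⟨ht₁.1, h₁⟩ ⟨ht₂.1, h₂⟩ hr
  · linarith [C.u_nonneg ⟨ht₁.1, h₁⟩, C.u_neg_of_mem ⟨h₂, ht₂.2⟩]
  · linarith [C.u_nonneg ⟨ht₂.1, h₂⟩, C.u_neg_of_mem ⟨h₁, ht₁.2⟩]
  · rw [← C.r_reflect t₁, ← C.r_reflect t₂] at hr
    linarith [C.strictAntiOn_r.injOn ⟨by linarith [ht₁.2], by linarith⟩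
      ⟨by linarith [ht₂.2], by linarith⟩ hr]

theorem injOn_cartesian (C : IsSymmetricLoop a μ T r u ψ) :
    InjOn (fun t => (r t * cos (π / 4 - u t), r t * sin (π / 4 - u t))) (Ico 0 (2 * T)) := by
  intro t₁ ht₁ t₂ ht₂ h
  have hα : ∀ t, π / 4 - u t ∈ Icc 0 π := fun t => by
    have := abs_lt.1 (C.abs_u_lt t)
    constructor <;> linarith [pi_pos]
  obtain ⟨hr, hu⟩ := eq_of_polar_eq (C.solves t₁).r_pos (C.solves t₂).r_pos (hα t₁) (hα t₂)
    (Prod.mk.inj h).1 (Prod.mk.inj h).2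
  exact C.injOn ht₁ ht₂ (Prod.ext hr (sub_right_injective hu))

end IsSymmetricLoop

end GeneratingCurve

theorem exists_closed_generating_curve_general (lam : ℝ) (hlam : lam < 0) (ν : ℝ) (hν : 1 < ν) :
    ∃ (P : ℝ) (x y θ : ℝ → ℝ), 0 < P ∧
      (∀ t : ℝ, 0 < x t ∧ 0 < y t) ∧
      (∀ t : ℝ, HasDerivAt x (cos (θ t)) t) ∧
      (∀ t : ℝ, HasDerivAt y (sin (θ t)) t) ∧
      (∀ t : ℝ, HasDerivAt θ
        ((x t / 2 - (ν - 1) / x t) * sin (θ t) +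
          ((ν - 1) / y t - y t / 2) * cos (θ t) + lam) t) ∧
      Function.Periodic x P ∧
      Function.Periodic y P ∧
      (∃ k : ℤ, ∀ t : ℝ, θ (t + P) = θ t + 2 * π * k) ∧
      Set.InjOn (fun t => (x t, y t)) (Set.Ico 0 P) ∧
      (∃ t₁ t₂ : ℝ, (x t₁) ^ 2 + (y t₁) ^ 2 ≠ (x t₂) ^ 2 + (y t₂) ^ 2) ∧
      (∀ t : ℝ, x (-t) = y t ∧ y (-t) = x t) := by
  obtain ⟨T, r, u, ψ, C⟩ := GeneratingCurve.exists_isSymmetricLoop (sub_pos.2 hν) (neg_pos.2 hlam)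
  have hr : ∀ t, 0 < r t := fun t => (C.solves t).r_pos
  have hrT : r T < r 0 := C.strictAntiOn_r ⟨le_rfl, C.T_pos.le⟩ ⟨C.T_pos.le, le_rfl⟩ C.T_pos
  refine ⟨2 * T, fun t => r t * cos (π / 4 - u t), fun t => r t * sin (π / 4 - u t),
    fun t => -(π / 4) - u t - ψ t, mul_pos two_pos C.T_pos,
    fun t => ⟨mul_pos (hr t) (GeneratingCurve.cos_pi_div_four_sub_pos (C.abs_u_lt t)),
      mul_pos (hr t) (GeneratingCurve.sin_pi_div_four_sub_pos (C.abs_u_lt t))⟩,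
    fun t => (C.solves t).hasDerivAt_x, fun t => (C.solves t).hasDerivAt_y,
    fun t => by simpa using (C.solves t).hasDerivAt_θ (C.abs_u_lt t),
    fun t => by simp only [C.r_add_period, C.u_add_period],
    fun t => by simp only [C.r_add_period, C.u_add_period],
    ⟨-1, fun t => by push_cast; rw [C.u_add_period, C.ψ_add_period]; ring⟩,
    C.injOn_cartesian, ⟨T, 0, ?_⟩, fun t => ?_⟩
  · simp only [mul_pow, ← mul_add, cos_sq_add_sin_sq, mul_one]
    exact (pow_lt_pow_left₀ hrT (hr T).le two_ne_zero).ne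
  · simp only [C.r_neg, C.u_neg, show π / 4 - -u t = π / 2 - (π / 4 - u t) by ring,
      cos_pi_div_two_sub, sin_pi_div_two_sub, and_self]

/-- Main existence theorem: there is a periodic solution of the generating system with
`m = n` whose trace is a simple closed curve in the open first quadrant that is not the
circle solution and is symmetric across the diagonal `y = x`.  (The angle θ, being the
continuously varying inclination of a simple closed curve, is periodic modulo `2π`.)
This generating curve produces a closed, embedded λ-hypersurface in `ℝ^{2n}`
diffeomorphic to `S^{n−1} × S^{n−1} × S^1` with `O(n) × O(n)` symmetry. -/
theorem exists_closed_generating_curve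
    (lam : ℝ) (hlam : lam < 0) (n : ℕ) (hn : 2 ≤ n) :
    ∃ (P : ℝ) (x y θ : ℝ → ℝ), 0 < P ∧
      (∀ t : ℝ, 0 < x t ∧ 0 < y t) ∧
      (∀ t : ℝ, HasDerivAt x (Real.cos (θ t)) t) ∧
      (∀ t : ℝ, HasDerivAt y (Real.sin (θ t)) t) ∧
      (∀ t : ℝ, HasDerivAt θ
        ((x t / 2 - ((n : ℝ) - 1) / x t) * Real.sin (θ t) +
          (((n : ℝ) - 1) / y t - y t / 2) * Real.cos (θ t) + lam) t) ∧
      Function.Periodic x P ∧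
      Function.Periodic y P ∧
      (∃ k : ℤ, ∀ t : ℝ, θ (t + P) = θ t + 2 * π * k) ∧
      Set.InjOn (fun t => (x t, y t)) (Set.Ico 0 P) ∧
      (∃ t₁ t₂ : ℝ, (x t₁) ^ 2 + (y t₁) ^ 2 ≠ (x t₂) ^ 2 + (y t₂) ^ 2) ∧
      (∀ t : ℝ, x (-t) = y t ∧ y (-t) = x t) :=
  exists_closed_generating_curve_general lam hlam n (by exact_mod_cast hn)
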